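/- arXiv:2511.01073 — 2 statements merged into one kernel-verified Lean document; each statement's English description precedes it below -/
import Mathlib

section
/- With the setup below, the block collection 𝓑' is the union of exactly 12 orbits under the action of W (the group of order 73 generated by the permutation w : xK ↦ (gx)K, acting on 𝓑' by π ↦ {w(X) : X ∈ π}); in particular |𝓑'| = 876 = 12·73. -/
/-!
The blocks outside the spread `Σ` are scattered: two of their nonzero vectors are never proportional
over `K`, since `xK` is the only block through such a pair. Counting pairs of `K`-independent vectors
gives `|𝓑 \ Σ| = 511 * 504 / 42 = 6132` (`ncard_blocks`), and `F^*` acts freely on `𝓑 \ Σ` by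
multiplication (`mulS_free`). The heart of the matter is that `π_B = π_{B'}` forces `B' = k B` with
`k ∈ K^*` (`key`). Then `B ↦ π_B` is `7`-to-`1` and the map from `B` to the `W`-orbit of `π_B` is
`511`-to-`1`, so there are `6132 / 7 = 876` point sets and `6132 / 511 = 12` orbits.

For `key`, let `b ∈ B` be nonzero; some `K^*`-multiple of `b` lies in `B'`, and two different `b` with
the same factor already give `B' = k B`. If `B` spans `F` over `K`, a comparison of coefficients
produces such a pair (`key_plane`). Otherwise `B` and `B'` lie on a line `PK + QK`, where `P` and `Q`
can be taken on two points missed by both (`exists_missed`). Then `B` is the graph of an additive map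
`f` on `K` for which `f t / t` permutes `K^*`, so that up to scaling `B` is either
`{t P + t ^ 2 Q}` or `{t P + t ^ 4 Q}` (`additive_form`, `normal_form`). If `B` and `B'` are of the
same type they are proportional. The two types have the same point set, and the design property
has to be used globally to show that they do not occur together (`no_two_gen`).

To this end consider the 85 orbits of `F^*` on two-dimensional `𝔽_2`-subspaces. The one of the
subspaces of `K` belongs to the spread; the seven two-dimensional subspaces of a block outside `Σ`
lie in different orbits, and the blocks partition the remaining 84 orbits into sets of size seven
(`labs_spec`, `masks_cover`, `masks_disjoint`). The Galois group, scaling and the exchange of the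
types reduce the possible lines to four cases; in each an exhaustive exact cover search, guided by
a short certificate and evaluated by the kernel, shows that no such partition contains the sets of
both types of blocks (`search_ok`, `go_sound`, `no_two`). Arithmetic in `F` is done with discrete
logarithms to the base of a root `α` of `X ^ 9 + X ^ 4 + 1`.
-/

noncomputable section

/-- `F9` is the field `𝔽_{2^9}`, viewed as a 9-dimensional vector space over `𝔽_2`. -/
abbrev F9 := GaloisField 2 9

/-- The subfield `K` of order 8 of `𝔽_{2^9}`, as a set: `K = {x : x^8 = x}`. -/
def Kset : Set F9 := {x | x ^ 8 = x}

/-- The 1-dimensional `K`-subspace `xK` of `F9` spanned by `x`; for `x ≠ 0` these are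
the points of `PG(2,8)` (with `F9` viewed as a 3-dimensional `K`-vector space). -/
def pt (x : F9) : Set F9 := {y | ∃ c ∈ Kset, y = x * c}

/-- `P` is a point of `PG(2,8)`: a 1-dimensional `K`-subspace `xK` with `x ≠ 0`. -/
def PGpoint (P : Set F9) : Prop := ∃ x : F9, x ≠ 0 ∧ P = pt x

/-- `L` is a line of `PG(2,8)`: a 2-dimensional `K`-subspace `xK + yK` with `x, y`
linearly independent over `K`. -/
def PGline (L : Set F9) : Prop :=
  ∃ x y : F9, x ≠ 0 ∧ y ∉ pt x ∧ L = {z | ∃ a ∈ Kset, ∃ b ∈ Kset, z = x * a + y * b}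

/-- `Σ`: the members of the design which are of the form `xK` (the Desarguesian
2-spread), viewed as `𝔽_2`-subspaces of `F9`. -/
def SigmaSet : Set (Submodule (ZMod 2) F9) := {S | ∃ x : F9, x ≠ 0 ∧ (S : Set F9) = pt x}

/-- `𝓑` is a cyclic 2-analog of a `(9,3,1)`-design: a set of 3-dimensional
`𝔽_2`-subspaces of `F9` such that every 2-dimensional `𝔽_2`-subspace is contained in
exactly one member, invariant under multiplication by the generator `g` of `F9^*`. -/
def IsCyclicTwoAnalog (g : F9) (𝓑 : Set (Submodule (ZMod 2) F9)) : Prop :=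
  (∀ x : F9, x ≠ 0 → ∃ m : ℕ, g ^ m = x) ∧
  (∀ S ∈ 𝓑, Module.finrank (ZMod 2) S = 3) ∧
  (∀ T : Submodule (ZMod 2) F9, Module.finrank (ZMod 2) T = 2 → ∃! S, S ∈ 𝓑 ∧ T ≤ S) ∧
  (∀ S ∈ 𝓑, ∃ S' ∈ 𝓑, (S' : Set F9) = (fun x => g * x) '' (S : Set F9))

/-- `π_B`: the set of points `xK` of `PG(2,8)` with `x` a nonzero element of `B`. -/
def piB (B : Submodule (ZMod 2) F9) : Set (Set F9) :=
  {P | ∃ x ∈ (B : Set F9), x ≠ 0 ∧ P = pt x}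

/-- `𝓑' = {π_B : B ∈ 𝓑 \ Σ}`. -/
def Bprime (𝓑 : Set (Submodule (ZMod 2) F9)) : Set (Set (Set F9)) :=
  {π | ∃ B ∈ 𝓑 \ SigmaSet, π = piB B}

/-- The permutation `w : xK ↦ (gx)K` of the points of `PG(2,8)`. -/
def wmap (g : F9) (P : Set F9) : Set F9 := (fun x => g * x) '' P

/-- The induced action of `w` on blocks (sets of points) of `PG(2,8)`. -/
def wact (g : F9) (π : Set (Set F9)) : Set (Set F9) := wmap g '' π

/-- The orbit of a block `π` under the group `W = ⟨w⟩`. -/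
def Worbit (g : F9) (π : Set (Set F9)) : Set (Set (Set F9)) :=
  {ρ | ∃ m : ℕ, (wact g)^[m] π = ρ}

/-- `π ∩ ℓ`: the set of points of `π` contained (as `K`-subspaces) in the line `L`. -/
def lineSec (π : Set (Set F9)) (L : Set F9) : Set (Set F9) := {P ∈ π | P ⊆ L}

/-- The imprint `I(𝓞,ℓ) = {π ∩ ℓ : π ∈ 𝓞, |π ∩ ℓ| = 3}` of an orbit `𝓞` on a line `L`. -/
def imprint (O : Set (Set (Set F9))) (L : Set F9) : Set (Set (Set F9)) :=
  {s | ∃ π ∈ O, (lineSec π L).ncard = 3 ∧ s = lineSec π L}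

/-- The sublines `PG(1,2)` of a line `L`: the 3-element sets of points
`{xK, yK, (x+y)K}` with `x, y ∈ L` linearly independent over `K`. -/
def sublines (L : Set F9) : Set (Set (Set F9)) :=
  {s | ∃ x y : F9, x ∈ L ∧ y ∈ L ∧ x ≠ 0 ∧ y ∉ pt x ∧ s = {pt x, pt y, pt (x + y)}}

end

namespace Singer

noncomputable section

/-! ### Tables and the search procedure -/

/-- Table of the exponential map: entry `i` (9 bits) is the coordinate vector of `α ^ i`. -/
def expTab : ℕ := 1411589266770012991317770747697509668678963873823649634995095541537739067599461751473235906612544223186908763929961750758069544740153591655925558087602075524547433653991169534946874016416490427488704833734911129337059025528604121066255057150496613538722589966813084125341390600548527140306321497457409610695327776154365512503661920897709656620457237532298011389536918570366130250296496430414741648264526702706039824885491240152109705833118002482737580873459530557835823684113184495812573441364874742834522176010938108182630965736150905323833931434306638181580782642554275595925110965550853184162852067828504348689946892247280791438837505347595438372227611682002967654676871902215484902927693231800130119642695845957594036964787703254735535603565972964088573860997217014318952964774247819516073255710856550690044262900746878537876899703186290591886286836910712318021100739911381683472064368129194369396710027276580182612179323153622127355975167987586737734228415118967545180913755955329244228391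6664245644418870870954289751604808896692971368052255243408579294077957474543944458657257173741387974345903273381548050242829034601246455355417487265303818558105794242766157627103867680508951395148789949881390093285331431713668652906316552712201861530169746230070260611661287972270464685044102147009261943740084226452584811808063810578786282208591075150208507846287054085846450897918572364801

/-- Table of Zech logarithms: entry `i` (9 bits) is the `j < 511` with `1 + α ^ i = α ^ j`. -/
def zechTab : ℕ := 6917804757176340094963780891430910254204241286209638836479420366031733655705417142530748067269716486422515406849284146520709564544803441923963176071242937070662184448236063342470508213891334071377815373772248906159871497932295182566814806737052149434683431121114474449672542345253327539876002878041215886015657691564250832073923956723033715292223808573200593797971971623910590228689845361216993083392064900025861428467616738777505620029794638884495832553016416184829422414259005386780632652655170930059833520276565547883280987505395524358608820410249872124702237619468376145394889850957138170395161294130044293867948254216745803258432435191115665622039280841970683209998751358800760406521399259914424006534164704169746915288015504594076903291962346930380165993938265380957411573513088566386033944080369300365032490307007930920486346533856861444905554072026379616147511290364573971094407342595026589622959694798278698433427425770595758075354307203244701192556500518373335646543458572163216434060678576276004151616212795325353910141656292973739852572436708865828064876740332442946492517765894217344125729015026125213181110057096060111637549234149300189493265327376687441471860155301559894400234588583845340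644142051038021758596399823649174526155259364234766394737266027950708612230626965143578579935732571467743016633814139502477904029683404368833881251317361862750841371048080852452352

/-- Table of class labels: entry `i` (7 bits) is the label of the `F^*`-orbit of the two-dimensional
subspace spanned by `1` and `α ^ i`. There are 85 orbits; label 84 is that of the subspaces of the
members `xK` of the spread. -/
def clsTab : ℕ := 37730003255950322812284477485747604080587856206233098346837956200331341212040277804963313071213493789946481975205357469814596219722725235690824910483783691487224891364692908240745898502529487706209762368056763193046153716030927496285337007750681755948926878077398739190984812787027320726340152893825760147459209488898615288323230597221542674091200947832026470861132197044239687660140326983273974284000298732476656281173341050376924149314375772929369562650609512308102592292226631452844832334329680032433920311930974311984181272492279211673475292955480021543505489097853587020300825614403132356861564780926534023418653410804073162615656153973391963526642354658434151836947273563568311661170659799594725001880988260102709331882813074889712301177930101960526278516317209063920149414584047261837560483810209963329944448067393223031777362096707032945038746327822308349234926600855180494476983813305519986447003105711365878286789210666902303663340356219389893185761640339596775256702908743304779549953029380197262351325149216674953404978253805889607905457886965016695626209968212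

/-- Table of representatives: entry `n` (9 bits) is an exponent `R` such that the span of `1` and
`α ^ R` has label `n`. -/
def repTab : ℕ := 27785093660293556711774293028440561591463582213792883705412888363030659582780215133051946413800223190705490963557818287919998664325011038882448953278375309162066381817837596708907585802260568038480643509006500334211588209955832833

/-- Coordinate vector of `α ^ i`, as a bit string. -/
def expo (i : ℕ) : ℕ := Nat.mod (Nat.shiftRight expTab (Nat.mul 9 i)) 512

/-- Zech logarithm: `1 + α ^ i = α ^ zech i` for `0 < i < 511`. -/
def zech (i : ℕ) : ℕ := Nat.mod (Nat.shiftRight zechTab (Nat.mul 9 i)) 512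

/-- Label of the two-dimensional subspace `⟨1, α ^ i⟩`. -/
def cls (i : ℕ) : ℕ := Nat.mod (Nat.shiftRight clsTab (Nat.mul 7 i)) 128

/-- Exponent of a representative of the class with label `i`. -/
def rep (i : ℕ) : ℕ := Nat.mod (Nat.shiftRight repTab (Nat.mul 9 i)) 512

/-- Difference of exponents modulo 511, for `j ≤ 511`. -/
def sb (i j : ℕ) : ℕ := Nat.mod (Nat.sub (Nat.add i 511) j) 511

/-- Logarithm of `α ^ i + α ^ j`, for different powers with `i, j < 511`. -/
def ad (i j : ℕ) : ℕ := Nat.mod (Nat.add i (zech (sb j i))) 511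

/-- The value `k n`. Elimination of `n` makes the kernel evaluate it to a literal before passing it
to `k`, which keeps the searches below from duplicating unevaluated terms. -/
def forceNat {β : Type} (n : ℕ) (k : ℕ → β) : β :=
  Nat.rec (k 0) (fun m _ => k (Nat.succ m)) n

/-- Adds the labels in `l` to a set of labels encoded as a bit mask; the result is `0` if a label is
already present or repeated. -/
def addLabs (l : List ℕ) : ℕ → ℕ :=
  List.rec (fun f => f) (fun c _ ih f =>
    forceNat (Nat.shiftLeft 1 c) fun b =>
      cond (Nat.beq (Nat.land f b) 0) (forceNat (Nat.lor f b) ih) 0) l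

/-- Labels of the seven two-dimensional subspaces of `⟨1, α ^ j, α ^ k⟩`. -/
def labs (j k : ℕ) : List ℕ :=
  forceNat (zech j) fun zj => forceNat (zech k) fun zk =>
    [cls j, cls k, cls (sb k j), cls (ad j k), cls (sb zk j), cls (sb k zj), cls (sb zk zj)]

/-- Whether `k` is the least logarithm in the coset `α ^ k + ⟨1, α ^ j⟩`. -/
def canon (j k : ℕ) : Bool :=
  cond (Nat.blt k (zech k)) (forceNat (ad j k) fun s => cond (Nat.blt k s) (Nat.blt k (zech s)) false)
    false

/-- Bit mask of the labels `84` and `0, …, i - 1`. -/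
def base (i : ℕ) : ℕ := Nat.add (Nat.pow 2 84) (Nat.sub (Nat.pow 2 i) 1)

/-- Bit mask of the seven labels of `⟨1, α ^ R, α ^ k⟩`, provided they are distinct, at least `i` and
different from `84`, and `k` is canonical; otherwise `0`. -/
def cm (i R k : ℕ) : ℕ :=
  cond (canon R k)
    (forceNat (base i) fun b => forceNat (addLabs (labs R k) b) fun f =>
      cond (Nat.beq f 0) 0 (Nat.xor f b)) 0

/-- Passes on `acc` extended by all nonzero masks `cm i R k` with `k < n`. -/
def genRow {β : Type} (i R n : ℕ) : List ℕ → (List ℕ → β) → β :=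
  Nat.rec (fun acc k => k acc) (fun m ih acc k =>
    forceNat (cm i R m) fun v => cond (Nat.beq v 0) (ih acc k) (ih (v :: acc) k)) n

/-- Passes on `acc` extended by all nonzero masks `cm i (rep i) k` with `i < n` and `k < 511`; for
`n = 84` these are all masks a block outside the spread can have. -/
def genAll {β : Type} (n : ℕ) : List ℕ → (List ℕ → β) → β :=
  Nat.rec (fun acc k => k acc) (fun i ih acc k =>
    forceNat (rep i) fun R => genRow i R 511 acc fun acc' => ih acc' k) n

/-- Passes on the members of `l` disjoint from the mask `x`. -/
def filt {β : Type} (x : ℕ) (l : List ℕ) : List ℕ → (List ℕ → β) → β :=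
  List.rec (fun acc k => k acc) (fun a _ ih acc k =>
    cond (Nat.beq (Nat.land a x) 0) (ih (a :: acc) k) (ih acc k)) l

/-- Runs the refutation `child` on all masks in `l` meeting `pw`, threading the certificate; `none`
means that one of them was not refuted. -/
def loop (pw : ℕ) (child : ℕ → ℕ → Option ℕ) (l : List ℕ) : ℕ → Option ℕ :=
  List.rec (fun s => some s) (fun a _ ih s =>
    cond (Nat.beq (Nat.land a pw) 0) (ih s)
      (Option.rec none (fun s' => ih s') (child a s))) l

/-- Refutation of all extensions of the partial cover `cov` to a partition of the labels `0, …, 83`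
by masks from `av`. The certificate `s` lists, in depth-first order and in base 128, the label on
which to branch at each node. The remaining certificate is returned on success. -/
def go (fuel : ℕ) : ℕ → List ℕ → ℕ → Option ℕ :=
  Nat.rec (fun _ _ _ => none) (fun _ ih cov av s =>
    forceNat (Nat.mod s 128) fun p => forceNat (Nat.shiftLeft 1 p) fun pw =>
    forceNat (Nat.div s 128) fun s' =>
      cond (Nat.blt p 84) (cond (Nat.beq (Nat.land cov pw) 0)
        (loop pw (fun a t => forceNat (Nat.lor cov a) fun cov' =>
          filt a av [] fun av' => ih cov' av' t) av s') none) none) fuel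

/-- `tj r e` and `tk r e` are the logarithms of the vectors with parameters `t = α ^ 73` and
`t = α ^ 146` of the block `{t α ^ r + t ^ e : t ∈ K}`, after division by the vector with
parameter `1`. -/
def tj (r e : ℕ) : ℕ := sb (ad (r + 73) (73 * e)) (ad r 0)

/-- See `tj`. -/
def tk (r e : ℕ) : ℕ := sb (ad (r + 146) (146 * e % 511)) (ad r 0)

/-- Bit mask of the labels of the block `{t α ^ r + t ^ e : t ∈ K}`. -/
def tmask (r e : ℕ) : ℕ := addLabs (labs (tj r e) (tk r e)) 0

/-- Whether the certificate `s` refutes all partitions of the labels into masks from `L` that contain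
both `tmask r 2` and `tmask r 4`. -/
def caseOK (r : ℕ) (L : List ℕ) (s : ℕ) : Bool :=
  forceNat (Nat.lor (tmask r 2) (tmask r 4)) fun cov =>
    filt cov L [] fun av => Option.isSome (go 12 cov av s)

/-! ### Verification of the tables, and a primitive element -/

/-- One step of multiplication by `α` on coordinate vectors, `α ^ 9 = α ^ 4 + 1`. -/
def step (e : ℕ) : ℕ := if e < 256 then 2 * e else (2 * e) ^^^ 529

/-- The element with coordinate vector `n` (bits) in the basis `1, a, …, a ^ 8`. -/
def vec {R : Type*} [CommRing R] (a : R) (n : ℕ) : R :=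
  ∑ k ∈ Finset.range 9, if n.testBit k then a ^ k else 0

theorem expTab_ok : expo 0 = 1 ∧ expo 510 < 512 ∧ step (expo 510) = 1 ∧
    ∀ i < 510, expo i < 512 ∧ expo (i + 1) = step (expo i) := by
  decide +kernel

theorem zechTab_ok : ∀ i < 511, i ≠ 0 →
    expo (zech i) = expo i ^^^ 1 ∧ zech i < 511 ∧ zech i ≠ 0 := by
  decide +kernel

theorem step_bits : ∀ e < 512,
    (step e).testBit 0 = e.testBit 8 ∧ (step e).testBit 1 = e.testBit 0 ∧
    (step e).testBit 2 = e.testBit 1 ∧ (step e).testBit 3 = e.testBit 2 ∧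
    (step e).testBit 4 = (e.testBit 3 ^^ e.testBit 8) ∧ (step e).testBit 5 = e.testBit 4 ∧
    (step e).testBit 6 = e.testBit 5 ∧ (step e).testBit 7 = e.testBit 6 ∧
    (step e).testBit 8 = e.testBit 7 := by
  decide +kernel

section ring
variable {R : Type*} [CommRing R] [CharP R 2]

theorem ite_xor (a : R) (p q : Bool) :
    (if (p ^^ q) = true then a else 0) = (if p = true then a else 0) + if q = true then a else 0 := by
  cases p <;> cases q <;> simp [CharTwo.add_self_eq_zero]

theorem vec_step {a : R} (ha : a ^ 9 = a ^ 4 + 1) {e : ℕ} (he : e < 512) :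
    vec a (step e) = a * vec a e := by
  obtain ⟨h0, h1, h2, h3, h4, h5, h6, h7, h8⟩ := step_bits e he
  simp only [vec, Finset.sum_range_succ, Finset.sum_range_zero, h0, h1, h2, h3, h4, h5, h6, h7, h8,
    ite_xor]
  have key : ∀ (p : Bool) (k : ℕ), (if p = true then a ^ k else 0) =
      (if p = true then (1 : R) else 0) * a ^ k := by
    intro p k; split_ifs <;> simp
  simp only [key]
  linear_combination (-(if e.testBit 8 = true then (1 : R) else 0)) * ha

theorem vec_xor_one (a : R) (e : ℕ) : vec a (e ^^^ 1) = vec a e + 1 := by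
  have h1 : ∀ k, Nat.testBit 1 (k + 1) = false := fun k => by
    rw [Nat.testBit_succ]; simp
  simp only [vec, Nat.testBit_xor, ite_xor, Finset.sum_add_distrib]
  congr 1
  rw [Finset.sum_range_succ']
  simp [h1]

theorem pow_eq_vec {a : R} (ha : a ^ 9 = a ^ 4 + 1) : ∀ i < 511, a ^ i = vec a (expo i) := by
  obtain ⟨h0, -, -, hs⟩ := expTab_ok
  intro i
  induction i with
  | zero => intro _; rw [h0]; simp [vec, Finset.sum_range_succ, Nat.testBit]
  | succ n ih =>
    intro hn
    rw [(hs n (by omega)).2, vec_step ha (hs n (by omega)).1, ← ih (by omega), pow_succ']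

theorem pow_511 {a : R} (ha : a ^ 9 = a ^ 4 + 1) : a ^ 511 = 1 := by
  obtain ⟨h0, h1, h2, -⟩ := expTab_ok
  rw [pow_succ', pow_eq_vec ha 510 (by norm_num), ← vec_step ha h1, h2]
  simp [vec, Finset.sum_range_succ, Nat.testBit]

theorem one_add_pow {a : R} (ha : a ^ 9 = a ^ 4 + 1) {i : ℕ} (hi : i < 511) (h0 : i ≠ 0) :
    1 + a ^ i = a ^ zech i := by
  obtain ⟨h1, h2, -⟩ := zechTab_ok i hi h0
  rw [pow_eq_vec ha _ h2, h1, vec_xor_one, ← pow_eq_vec ha _ hi, add_comm]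

end ring

section root
open Polynomial

theorem exists_root : ∃ a : F9, a ^ 9 = a ^ 4 + 1 := by
  let P : (ZMod 2)[X] := X ^ 9 + X ^ 4 + 1
  have hP : P.Monic := by unfold P; monicity!
  have hdeg : P.natDegree = 9 := by unfold P; compute_degree!
  have : CharP (AdjoinRoot P) 2 :=
    charP_of_injective_algebraMap (AdjoinRoot.of.injective_of_degree_ne_zero (by
      rw [Polynomial.degree_eq_natDegree hP.ne_zero, hdeg]; norm_num)) 2
  have h1 : (AdjoinRoot.root P) ^ 9 = (AdjoinRoot.root P) ^ 4 + 1 := by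
    have := AdjoinRoot.eval₂_root P
    simp only [P, eval₂_add, eval₂_X_pow, eval₂_one] at this
    exact CharTwo.add_eq_zero.mp ((add_assoc _ _ _).symm.trans this)
  have h2 := pow_511 h1
  have hdvd : P ∣ X ^ 2 ^ 9 - X := by
    rw [← AdjoinRoot.mk_eq_zero]
    have : (AdjoinRoot.root P) ^ 512 = AdjoinRoot.root P := by rw [pow_succ, h2, one_mul]
    simp [this, AdjoinRoot.mk_X]
  have hs : (P.map (algebraMap (ZMod 2) F9)).Splits := by
    refine (SplittingField.splits (X ^ 2 ^ 9 - X : (ZMod 2)[X])).of_dvd ?_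
      (Polynomial.map_dvd _ hdvd)
    exact Polynomial.map_ne_zero (FiniteField.X_pow_card_pow_sub_X_ne_zero _ (by norm_num)
      (by norm_num))
  obtain ⟨a, ha⟩ := hs.exists_eval_eq_zero (by
    rw [Polynomial.degree_map, Polynomial.degree_eq_natDegree hP.ne_zero, hdeg]; norm_num)
  refine ⟨a, ?_⟩
  simp only [P, Polynomial.map_add, Polynomial.map_pow, map_X, Polynomial.map_one, eval_add,
    eval_pow, eval_X, eval_one] at ha
  rw [add_assoc] at ha
  exact CharTwo.add_eq_zero.mp ha
end root

/-! ### Arithmetic of `F` and of `K` -/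

section alpha

theorem card_F9 : Nat.card F9 = 512 := GaloisField.card 2 9 (by norm_num)

variable {α : F9}

theorem alpha_ne_zero (hα : α ^ 9 = α ^ 4 + 1) : α ≠ 0 := by
  rintro rfl; norm_num at hα

theorem alpha_pow_ne_one (hα : α ^ 9 = α ^ 4 + 1) {i : ℕ} (hi : i < 511) (h0 : i ≠ 0) :
    α ^ i ≠ 1 := by
  intro h
  have := one_add_pow hα hi h0
  rw [h, CharTwo.add_self_eq_zero] at this
  exact pow_ne_zero _ (alpha_ne_zero hα) this.symm

theorem orderOf_alpha (hα : α ^ 9 = α ^ 4 + 1) : orderOf α = 511 := by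
  rw [orderOf_eq_iff (by norm_num)]
  exact ⟨pow_511 hα, fun m hm h0 => alpha_pow_ne_one hα hm (by omega)⟩

theorem alpha_surj (hα : α ^ 9 = α ^ 4 + 1) {x : F9} (hx : x ≠ 0) : ∃ i < 511, α ^ i = x := by
  classical
  have : Fintype F9 := Fintype.ofFinite _
  have hinj : Set.InjOn (fun i => α ^ i) (Finset.range 511 : Finset ℕ) := by
    intro i hi j hj h
    have := pow_injOn_Iio_orderOf (x := α)
    rw [orderOf_alpha hα] at this
    exact this (by simpa using hi) (by simpa using hj) h
  have himg : (Finset.range 511).image (fun i => α ^ i) = Finset.univ.erase (0 : F9) := by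
    refine Finset.eq_of_subset_of_card_le ?_ ?_
    · intro y hy
      obtain ⟨i, -, rfl⟩ := Finset.mem_image.mp hy
      simp [alpha_ne_zero hα]
    · rw [Finset.card_image_of_injOn hinj, Finset.card_erase_of_mem (Finset.mem_univ _),
        Finset.card_univ, ← Nat.card_eq_fintype_card, card_F9, Finset.card_range]
  have : x ∈ (Finset.range 511).image (fun i => α ^ i) := by rw [himg]; simp [hx]
  obtain ⟨i, hi, h⟩ := Finset.mem_image.mp this
  exact ⟨i, by simpa using hi, h⟩

theorem pow_mod (hα : α ^ 9 = α ^ 4 + 1) (n : ℕ) : α ^ (n % 511) = α ^ n := by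
  conv_rhs => rw [← Nat.mod_add_div n 511, pow_add, pow_mul, pow_511 hα, one_pow, mul_one]

theorem pow_inj (hα : α ^ 9 = α ^ 4 + 1) {i j : ℕ} (h : α ^ i = α ^ j) : i % 511 = j % 511 := by
  rw [← pow_mod hα i, ← pow_mod hα j] at h
  have hinj := pow_injOn_Iio_orderOf (x := α)
  rw [orderOf_alpha hα] at hinj
  exact hinj (Nat.mod_lt _ (by norm_num)) (Nat.mod_lt _ (by norm_num)) h

/-- The discrete logarithm to base `α`, with values below 511. -/
def lg (α x : F9) : ℕ := sInf {i | α ^ i = x}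

theorem lg_spec (hα : α ^ 9 = α ^ 4 + 1) {x : F9} (hx : x ≠ 0) : α ^ lg α x = x ∧ lg α x < 511 := by
  obtain ⟨i, hi, h⟩ := alpha_surj hα hx
  exact ⟨Nat.sInf_mem (s := {i | α ^ i = x}) ⟨i, h⟩, lt_of_le_of_lt (Nat.sInf_le h) hi⟩

theorem lg_pow (hα : α ^ 9 = α ^ 4 + 1) {i : ℕ} (hi : i < 511) : lg α (α ^ i) = i := by
  obtain ⟨h1, h2⟩ := lg_spec hα (pow_ne_zero i (alpha_ne_zero hα))
  have := pow_inj hα h1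
  rwa [Nat.mod_eq_of_lt h2, Nat.mod_eq_of_lt hi] at this

theorem pow_sb (hα : α ^ 9 = α ^ 4 + 1) {i j : ℕ} (hj : j < 511) : α ^ sb i j = α ^ i / α ^ j := by
  rw [eq_div_iff (pow_ne_zero _ (alpha_ne_zero hα)), sb]
  show α ^ ((i + 511 - j) % 511) * α ^ j = _
  rw [pow_mod hα, ← pow_add, show i + 511 - j + j = i + 511 by omega, pow_add, pow_511 hα, mul_one]

theorem sb_lt (i j : ℕ) : sb i j < 511 := Nat.mod_lt _ (by norm_num)

theorem ad_lt (i j : ℕ) : ad i j < 511 := Nat.mod_lt _ (by norm_num)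

theorem sb_ne_zero (hα : α ^ 9 = α ^ 4 + 1) {i j : ℕ} (hj : j < 511) (h : α ^ i ≠ α ^ j) :
    sb i j ≠ 0 := by
  intro h0
  have := pow_sb hα (i := i) hj
  rw [h0, pow_zero, eq_comm, div_eq_one_iff_eq (pow_ne_zero _ (alpha_ne_zero hα))] at this
  exact h this

theorem pow_ad (hα : α ^ 9 = α ^ 4 + 1) {i j : ℕ} (hi : i < 511) (h : α ^ i ≠ α ^ j) :
    α ^ ad i j = α ^ i + α ^ j := by
  rw [ad]
  show α ^ ((i + zech (sb j i)) % 511) = _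
  rw [pow_mod hα, pow_add, ← one_add_pow hα (sb_lt _ _) (sb_ne_zero hα hi h.symm), pow_sb hα hi]
  field_simp [alpha_ne_zero hα]

end alpha

section sets

theorem K_zero : (0 : F9) ∈ Kset := by simp [Kset]
theorem K_one : (1 : F9) ∈ Kset := by simp [Kset]
theorem K_add {a b : F9} (ha : a ∈ Kset) (hb : b ∈ Kset) : a + b ∈ Kset := by
  simp only [Kset, Set.mem_ofPred_eq] at *
  have := add_pow_char_pow (R := F9) (p := 2) (n := 3) a b
  norm_num at this
  rw [this, ha, hb]
theorem K_mul {a b : F9} (ha : a ∈ Kset) (hb : b ∈ Kset) : a * b ∈ Kset := by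
  simp only [Kset, Set.mem_ofPred_eq] at *
  rw [mul_pow, ha, hb]
theorem K_inv {a : F9} (ha : a ∈ Kset) : a⁻¹ ∈ Kset := by
  simp only [Kset, Set.mem_ofPred_eq] at *
  rw [inv_pow, ha]
theorem K_pow {a : F9} (ha : a ∈ Kset) (n : ℕ) : a ^ n ∈ Kset := by
  simp only [Kset, Set.mem_ofPred_eq] at *
  rw [← pow_mul, mul_comm, pow_mul, ha]

theorem K_iff {α : F9} (hα : α ^ 9 = α ^ 4 + 1) {i : ℕ} : α ^ i ∈ Kset ↔ 73 ∣ i := by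
  simp only [Kset, Set.mem_ofPred_eq]
  rw [← pow_mul]
  constructor
  · intro h
    have := pow_inj hα h
    omega
  · intro h
    rw [← pow_mod hα (i * 8), ← pow_mod hα i]
    congr 1
    omega

theorem card_K : Nat.card Kset = 8 := by
  classical
  obtain ⟨α, hα⟩ := exists_root
  have h : Kset = ↑(insert 0 ((Finset.range 7).image fun i => α ^ (73 * i)) : Finset F9) := by
    ext x
    rw [Finset.mem_coe, Finset.mem_insert, Finset.mem_image]
    constructor
    · intro hx
      rcases eq_or_ne x 0 with h0 | h0
      · exact Or.inl h0
      · obtain ⟨i, hi, rfl⟩ := alpha_surj hα h0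
        obtain ⟨j, rfl⟩ := (K_iff hα).mp hx
        exact Or.inr ⟨j, Finset.mem_range.mpr (by omega), rfl⟩
    · rintro (rfl | ⟨j, -, rfl⟩)
      · exact K_zero
      · exact (K_iff hα).mpr ⟨j, rfl⟩
  rw [h, Nat.card_coe_set_eq, Set.ncard_coe_finset, Finset.card_insert_of_notMem,
    Finset.card_image_of_injOn, Finset.card_range]
  · intro i hi j hj hij
    have := pow_inj hα hij
    simp at hi hj
    omega
  · simp [alpha_ne_zero hα]

theorem mem_pt {x y : F9} (hx : x ≠ 0) : y ∈ pt x ↔ y / x ∈ Kset := by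
  constructor
  · rintro ⟨c, hc, rfl⟩
    rwa [mul_div_cancel_left₀ _ hx]
  · intro h
    exact ⟨y / x, h, by field_simp⟩

theorem self_mem_pt (x : F9) : x ∈ pt x := ⟨1, K_one, by simp⟩

theorem pt_eq_iff {x y : F9} (hx : x ≠ 0) (hy : y ≠ 0) : pt x = pt y ↔ y / x ∈ Kset := by
  constructor
  · intro h
    rw [← mem_pt hx, h]
    exact self_mem_pt y
  · intro h
    ext z
    rw [mem_pt hx, mem_pt hy]
    constructor
    · intro hz
      have := K_mul hz (K_inv h)
      rwa [show z / x * (y / x)⁻¹ = z / y by field_simp] at this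
    · intro hz
      have := K_mul hz h
      rwa [show z / y * (y / x) = z / x by field_simp] at this

/-- The point `xK` as an `𝔽₂`-subspace. -/
def ptS (x : F9) : Submodule (ZMod 2) F9 :=
  AddSubgroup.toZModSubmodule 2
    { carrier := pt x
      zero_mem' := ⟨0, K_zero, by simp⟩
      add_mem' := by
        rintro _ _ ⟨a, ha, rfl⟩ ⟨b, hb, rfl⟩
        exact ⟨a + b, K_add ha hb, by ring⟩
      neg_mem' := by
        rintro _ ⟨a, ha, rfl⟩
        exact ⟨a, ha, by rw [CharTwo.neg_eq]⟩ }

theorem coe_ptS (x : F9) : (ptS x : Set F9) = pt x := rfl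

/-- The subspace `cB`. -/
def mulS (c : F9) (B : Submodule (ZMod 2) F9) : Submodule (ZMod 2) F9 :=
  B.map (LinearMap.mulLeft (ZMod 2) c)

theorem mem_mulS {c x : F9} {B : Submodule (ZMod 2) F9} (hc : c ≠ 0) :
    x ∈ mulS c B ↔ c⁻¹ * x ∈ B := by
  simp only [mulS, Submodule.mem_map, LinearMap.mulLeft_apply]
  constructor
  · rintro ⟨y, hy, rfl⟩
    rwa [inv_mul_cancel_left₀ hc]
  · intro h
    exact ⟨_, h, mul_inv_cancel_left₀ hc x⟩

theorem mul_mem_mulS {c x : F9} {B : Submodule (ZMod 2) F9} (hx : x ∈ B) : c * x ∈ mulS c B :=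
  Submodule.mem_map.mpr ⟨x, hx, rfl⟩

theorem coe_mulS (c : F9) (B : Submodule (ZMod 2) F9) :
    (mulS c B : Set F9) = (fun x => c * x) '' (B : Set F9) := rfl

theorem mulS_mulS (c d : F9) (B : Submodule (ZMod 2) F9) : mulS c (mulS d B) = mulS (c * d) B := by
  apply SetLike.coe_injective
  simp only [coe_mulS, Set.image_image, mul_assoc]

theorem mulS_one (B : Submodule (ZMod 2) F9) : mulS 1 B = B := by
  apply SetLike.coe_injective
  simp [coe_mulS]

theorem mulS_inv {c : F9} (hc : c ≠ 0) {B B' : Submodule (ZMod 2) F9} (h : mulS c B = B') :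
    B = mulS c⁻¹ B' := by
  rw [← h, mulS_mulS, inv_mul_cancel₀ hc, mulS_one]

end sets

/-! ### Blocks and their multiples -/

section design

variable {g : F9} {𝓑 : Set (Submodule (ZMod 2) F9)}

theorem finrank_span_pair {x y : F9} (hx : x ≠ 0) (hy : y ≠ 0) (hxy : x ≠ y) :
    Module.finrank (ZMod 2) (Submodule.span (ZMod 2) {x, y}) = 2 := by
  have hli : LinearIndependent (ZMod 2) ![x, y] := by
    rw [LinearIndependent.pair_iff' hx]
    intro a
    have : a = 0 ∨ a = 1 := by revert a; decide
    rcases this with rfl | rfl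
    · simpa using hy.symm
    · simpa using hxy
  have := finrank_span_eq_card hli
  rwa [Matrix.range_cons_cons_empty, Fintype.card_fin] at this

theorem block_unique (h : IsCyclicTwoAnalog g 𝓑) {B B' : Submodule (ZMod 2) F9} (hB : B ∈ 𝓑)
    (hB' : B' ∈ 𝓑) {x y : F9} (hx : x ≠ 0) (hy : y ≠ 0) (hxy : x ≠ y) (h1 : x ∈ B) (h2 : y ∈ B)
    (h3 : x ∈ B') (h4 : y ∈ B') : B = B' := by
  obtain ⟨S, -, hS⟩ := h.2.2.1 _ (finrank_span_pair hx hy hxy)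
  have e1 := hS B ⟨hB, Submodule.span_le.mpr (by simp [Set.insert_subset_iff, h1, h2])⟩
  have e2 := hS B' ⟨hB', Submodule.span_le.mpr (by simp [Set.insert_subset_iff, h3, h4])⟩
  rw [e1, e2]

theorem block_exists (h : IsCyclicTwoAnalog g 𝓑) {x y : F9} (hx : x ≠ 0) (hy : y ≠ 0)
    (hxy : x ≠ y) : ∃ B ∈ 𝓑, x ∈ B ∧ y ∈ B := by
  obtain ⟨S, ⟨hS, hle⟩, -⟩ := h.2.2.1 _ (finrank_span_pair hx hy hxy)
  exact ⟨S, hS, hle (Submodule.subset_span (by simp)), hle (Submodule.subset_span (by simp))⟩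

theorem mulS_mem (h : IsCyclicTwoAnalog g 𝓑) {c : F9} (hc : c ≠ 0)
    {B : Submodule (ZMod 2) F9} (hB : B ∈ 𝓑) : mulS c B ∈ 𝓑 := by
  obtain ⟨m, rfl⟩ := h.1 c hc
  clear hc
  induction m with
  | zero => rwa [pow_zero, mulS_one]
  | succ n ih =>
    obtain ⟨S', hS', he⟩ := h.2.2.2 _ ih
    rw [pow_succ', ← mulS_mulS]
    have e : mulS g (mulS (g ^ n) B) = S' := SetLike.coe_injective he.symm
    rw [e]
    exact hS'

theorem card_block (h : IsCyclicTwoAnalog g 𝓑) {B : Submodule (ZMod 2) F9} (hB : B ∈ 𝓑) :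
    Nat.card B = 8 := by
  have := Module.natCard_eq_pow_finrank (K := ZMod 2) (V := B)
  rw [this, h.2.1 B hB]
  simp

theorem block_scattered (h : IsCyclicTwoAnalog g 𝓑) (hSig : SigmaSet ⊆ 𝓑)
    {B : Submodule (ZMod 2) F9} (hB : B ∈ 𝓑 \ SigmaSet) {x y : F9} (hx : x ∈ B) (hy : y ∈ B)
    (hx0 : x ≠ 0) (hy0 : y ≠ 0) (hK : y / x ∈ Kset) : x = y := by
  by_contra hne
  have hm : ptS x ∈ SigmaSet := ⟨x, hx0, rfl⟩
  have := block_unique h hB.1 (hSig hm) hx0 hy0 hne hx hy (self_mem_pt x) ((mem_pt hx0).mpr hK)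
  exact hB.2 (this ▸ hm)

theorem mulS_mem_diff (h : IsCyclicTwoAnalog g 𝓑) {c : F9} (hc : c ≠ 0)
    {B : Submodule (ZMod 2) F9} (hB : B ∈ 𝓑 \ SigmaSet) : mulS c B ∈ 𝓑 \ SigmaSet := by
  refine ⟨mulS_mem h hc hB.1, ?_⟩
  rintro ⟨x, hx, he⟩
  refine hB.2 ⟨c⁻¹ * x, mul_ne_zero (inv_ne_zero hc) hx, ?_⟩
  have e : B = mulS c⁻¹ (mulS c B) := mulS_inv hc rfl
  rw [congrArg (SetLike.coe : _ → Set F9) e, coe_mulS, he]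
  ext z
  constructor
  · rintro ⟨_, ⟨k, hk, rfl⟩, rfl⟩
    exact ⟨k, hk, by simp [mul_assoc]⟩
  · rintro ⟨k, hk, rfl⟩
    exact ⟨x * k, ⟨k, hk, rfl⟩, by simp [mul_assoc]⟩

/-- The group `F^*` acts freely on the blocks outside the spread: multiplication by `c` permutes
the seven nonzero vectors of a fixed block, so their product shows `c ^ 7 = 1`, hence `c ∈ K`. -/
theorem mulS_free (h : IsCyclicTwoAnalog g 𝓑) (hSig : SigmaSet ⊆ 𝓑)
    {B : Submodule (ZMod 2) F9} (hB : B ∈ 𝓑 \ SigmaSet) {c : F9} (hc : c ≠ 0)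
    (he : mulS c B = B) : c = 1 := by
  classical
  have : Fintype F9 := Fintype.ofFinite _
  let s : Finset F9 := Finset.univ.filter fun x => x ∈ B ∧ x ≠ 0
  have hs : s.card = 7 := by
    have h1 : insert 0 s = (Finset.univ.filter fun x => x ∈ B) := by
      ext x
      simp only [s, Finset.mem_insert, Finset.mem_filter, Finset.mem_univ, true_and]
      constructor
      · rintro (rfl | hx)
        · exact B.zero_mem
        · exact hx.1
      · intro hx
        by_cases h0 : x = 0 <;> simp [h0, hx]
    have h2 : (insert 0 s).card = 8 := by
      rw [h1, ← card_block h hB.1, Nat.card_eq_fintype_card, Fintype.card_subtype]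
    rw [Finset.card_insert_of_notMem (by simp [s])] at h2
    omega
  have hperm : ∏ x ∈ s, (c * x) = ∏ x ∈ s, x := by
    refine Finset.prod_bij (fun x _ => c * x) ?_ ?_ ?_ ?_
    · intro x hx
      simp only [s, Finset.mem_filter, Finset.mem_univ, true_and] at hx ⊢
      exact ⟨he ▸ mul_mem_mulS hx.1, mul_ne_zero hc hx.2⟩
    · intro x _ y _ hxy
      exact mul_left_cancel₀ hc hxy
    · intro y hy
      simp only [s, Finset.mem_filter, Finset.mem_univ, true_and] at hy
      refine ⟨c⁻¹ * y, ?_, mul_inv_cancel_left₀ hc y⟩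
      simp only [s, Finset.mem_filter, Finset.mem_univ, true_and]
      exact ⟨(mem_mulS hc).mp (he.symm ▸ hy.1), mul_ne_zero (inv_ne_zero hc) hy.2⟩
    · intros; rfl
  rw [Finset.prod_mul_distrib, Finset.prod_const, hs] at hperm
  have hp0 : ∏ x ∈ s, x ≠ 0 := Finset.prod_ne_zero_iff.mpr fun x hx => by
    simp only [s, Finset.mem_filter] at hx
    exact hx.2.2
  have hc7 : c ^ 7 = 1 := by
    have := mul_right_cancel₀ hp0 (hperm.trans (one_mul _).symm)
    exact this
  have hcK : c ∈ Kset := by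
    simp only [Kset, Set.mem_ofPred_eq]
    rw [pow_succ, hc7, one_mul]
  obtain ⟨x, hx⟩ : s.Nonempty := by rw [← Finset.card_pos, hs]; norm_num
  simp only [s, Finset.mem_filter, Finset.mem_univ, true_and] at hx
  have := block_scattered h hSig hB hx.1 (he ▸ mul_mem_mulS (c := c) hx.1) hx.2
    (mul_ne_zero hc hx.2) (by rwa [mul_div_cancel_right₀ _ hx.2])
  exact (mul_right_cancel₀ hx.2 ((one_mul x).trans this)).symm

/-- A block containing independent `x, y, z` consists of their eight subset sums. -/
theorem block_elems (h : IsCyclicTwoAnalog g 𝓑) {B : Submodule (ZMod 2) F9} (hB : B ∈ 𝓑)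
    {x y z : F9} (hx : x ∈ B) (hy : y ∈ B) (hz : z ∈ B) (hx0 : x ≠ 0) (hy0 : y ≠ 0) (hxy : x ≠ y)
    (hz0 : z ≠ 0) (hzx : z ≠ x) (hzy : z ≠ y) (hzxy : z ≠ x + y) {u : F9} (hu : u ∈ B) :
    u = 0 ∨ u = x ∨ u = y ∨ u = x + y ∨ u = z ∨ u = x + z ∨ u = y + z ∨ u = x + y + z := by
  classical
  let t : Finset F9 := {0, x, y, x + y, z, x + z, y + z, x + y + z}
  have hsub : (t : Set F9) ⊆ B := by
    intro v hv
    simp only [t, Finset.coe_insert, Finset.coe_singleton, Set.mem_insert_iff,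
      Set.mem_singleton_iff] at hv
    rcases hv with rfl | rfl | rfl | rfl | rfl | rfl | rfl | rfl
    · exact B.zero_mem
    all_goals first | assumption | (repeat' apply B.add_mem) <;> assumption
  have e2 : ∀ a : F9, a + a = 0 := CharTwo.add_self_eq_zero
  have hcard : t.card = 8 := by
    have ex := e2 x
    have ey := e2 y
    have ez := e2 z
    simp only [t]
    repeat rw [Finset.card_insert_of_notMem]
    · simp
    all_goals
      simp only [Finset.mem_insert, Finset.mem_singleton, not_or]
      grind
  have heq : (t : Set F9) = B := by
    refine Set.eq_of_subset_of_ncard_le hsub ?_ (Set.toFinite _)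
    rw [Set.ncard_coe_finset, hcard, ← Nat.card_coe_set_eq]
    exact (card_block h hB).le
  have : u ∈ (t : Set F9) := heq ▸ hu
  simpa [t] using this

theorem exists_notin (h : IsCyclicTwoAnalog g 𝓑) {B : Submodule (ZMod 2) F9} (hB : B ∈ 𝓑)
    (s : Finset F9) (hs : s.card < 8) : ∃ u ∈ B, u ∉ s := by
  by_contra hc
  push Not at hc
  have h1 : (B : Set F9).ncard ≤ (s : Set F9).ncard :=
    Set.ncard_le_ncard (fun u hu => hc u hu) s.finite_toSet
  rw [Set.ncard_coe_finset, ← Nat.card_coe_set_eq] at h1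
  have h2 := card_block h hB
  have h3 : Nat.card (B : Set F9) = 8 := h2
  omega

end design

/-! ### Orbits of two-dimensional subspaces -/

section classes

theorem clsTab_ok : ∀ i < 511, i ≠ 0 → cls (zech i) = cls i ∧ cls (511 - i) = cls i ∧ cls i ≤ 84 ∧
    (cls i = 84 → i % 73 = 0) ∧ (rep (cls i) < 511 ∧ rep (cls i) ≠ 0) ∧
    (i = rep (cls i) ∨ i = 511 - rep (cls i) ∨ i = zech (rep (cls i)) ∨
      i = 511 - zech (rep (cls i)) ∨ i = zech (511 - rep (cls i)) ∨
      i = 511 - zech (511 - rep (cls i))) := by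
  decide +kernel

/-- The class label of the pair `u, v`; for `u ≠ v` nonzero it only depends on the
`F^*`-orbit of the two-dimensional subspace spanned by `u` and `v`. -/
def kap (α u v : F9) : ℕ := cls (lg α (v / u))

variable {α : F9}

theorem pow_sub_eq (hα : α ^ 9 = α ^ 4 + 1) {i : ℕ} (hi : i < 511) :
    α ^ (511 - i) = (α ^ i)⁻¹ := by
  refine eq_inv_of_mul_eq_one_left ?_
  rw [← pow_add, Nat.sub_add_cancel hi.le, pow_511 hα]

theorem exists_log (hα : α ^ 9 = α ^ 4 + 1) {u v : F9} (hu : u ≠ 0) (hv : v ≠ 0) (huv : u ≠ v) :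
    ∃ i < 511, i ≠ 0 ∧ v = u * α ^ i ∧ kap α u v = cls i := by
  obtain ⟨h1, h2⟩ := lg_spec hα (div_ne_zero hv hu)
  refine ⟨_, h2, ?_, ?_, rfl⟩
  · intro h0
    rw [h0, pow_zero, eq_comm, div_eq_one_iff_eq hu] at h1
    exact huv h1.symm
  · rw [h1, mul_div_cancel₀ _ hu]

theorem kap_of_eq (hα : α ^ 9 = α ^ 4 + 1) {u v : F9} (hu : u ≠ 0) {i : ℕ} (hi : i < 511)
    (h : v = u * α ^ i) : kap α u v = cls i := by
  rw [kap, h, mul_div_cancel_left₀ _ hu, lg_pow hα hi]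

theorem kap_symm (hα : α ^ 9 = α ^ 4 + 1) {u v : F9} (hu : u ≠ 0) (hv : v ≠ 0) (huv : u ≠ v) :
    kap α v u = kap α u v := by
  obtain ⟨i, hi, h0, h, hk⟩ := exists_log hα hu hv huv
  rw [hk, ← (clsTab_ok i hi h0).2.1]
  refine kap_of_eq hα hv (by omega) ?_
  rw [pow_sub_eq hα hi, h, mul_assoc, mul_inv_cancel₀ (pow_ne_zero _ (alpha_ne_zero hα)), mul_one]

theorem kap_add (hα : α ^ 9 = α ^ 4 + 1) {u v : F9} (hu : u ≠ 0) (hv : v ≠ 0) (huv : u ≠ v) :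
    kap α u (u + v) = kap α u v := by
  obtain ⟨i, hi, h0, h, hk⟩ := exists_log hα hu hv huv
  rw [hk, ← (clsTab_ok i hi h0).1]
  refine kap_of_eq hα hu (zechTab_ok i hi h0).2.1 ?_
  rw [← one_add_pow hα hi h0, h]
  ring

theorem add_ne_zero' {u v : F9} (h : u ≠ v) : u + v ≠ 0 := fun h0 => h (CharTwo.add_eq_zero.mp h0)

/-- All six ordered pairs of nonzero vectors of a two-dimensional subspace have the same label. -/
theorem kap_six (hα : α ^ 9 = α ^ 4 + 1) {u v w : F9} (hu : u ≠ 0) (hv : v ≠ 0) (huv : u ≠ v)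
    (hw : w = u + v) : kap α v u = kap α u v ∧ kap α u w = kap α u v ∧ kap α w u = kap α u v ∧
      kap α v w = kap α u v ∧ kap α w v = kap α u v := by
  subst hw
  have hw := add_ne_zero' huv
  have h1 := kap_symm hα hu hv huv
  have h2 := kap_add hα hu hv huv
  have h3 := kap_add hα hv hu huv.symm
  rw [add_comm v u] at h3
  have h4 := kap_symm hα hu hw (by simpa using hv)
  have h5 := kap_symm hα hv hw (by simpa using hu)
  exact ⟨h1, h2, h4.trans h2, h3.trans h1, h5.trans (h3.trans h1)⟩

/-- Every two-dimensional subspace `⟨u, v⟩` with label `n` has an ordered basis `p, q` with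
`q / p = α ^ rep n`. -/
theorem kap_rep (hα : α ^ 9 = α ^ 4 + 1) {u v : F9} (hu : u ≠ 0) (hv : v ≠ 0) (huv : u ≠ v) :
    ∃ p q : F9, q = p * α ^ rep (kap α u v) ∧ p ≠ 0 ∧ q ≠ 0 ∧ p ≠ q ∧
      (p = u ∨ p = v ∨ p = u + v) ∧ (q = u ∨ q = v ∨ q = u + v) ∧
      (u = p ∨ u = q ∨ u = p + q) ∧ (v = p ∨ v = q ∨ v = p + q) := by
  obtain ⟨i, hi, h0, h, hk⟩ := exists_log hα hu hv huv
  obtain ⟨-, -, -, -, ⟨hR, hR0⟩, hc⟩ := clsTab_ok i hi h0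
  rw [hk]
  set R := rep (cls i)
  have hzR := zechTab_ok R hR hR0
  have hR' := zechTab_ok (511 - R) (by omega) (by omega)
  have ha : α ^ R ≠ 0 := pow_ne_zero _ (alpha_ne_zero hα)
  have e1 := one_add_pow hα hR hR0
  have e2 := one_add_pow hα (show 511 - R < 511 by omega) (show 511 - R ≠ 0 by omega)
  rw [pow_sub_eq hα hR] at e2
  have huu : u + u = 0 := CharTwo.add_self_eq_zero u
  have hvv : v + v = 0 := CharTwo.add_self_eq_zero v
  have huv0 := add_ne_zero' huv
  have huv1 : u ≠ u + v := by simpa using hv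
  have huv2 : v ≠ u + v := by simpa using hu
  have inv_case : ∀ j < 511, i = 511 - j → u = v * α ^ j := by
    intro j hj hij
    rw [h, hij, pow_sub_eq hα hj, mul_assoc, inv_mul_cancel₀ (pow_ne_zero _ (alpha_ne_zero hα)),
      mul_one]
  rcases hc with hc | hc | hc | hc | hc | hc
  · exact ⟨u, v, by rw [h, hc], hu, hv, huv, by simp, by simp, by simp, by simp⟩
  · exact ⟨v, u, inv_case R hR hc, hv, hu, huv.symm, by simp, by simp, by simp, by simp⟩
  · refine ⟨u, u + v, ?_, hu, huv0, huv1, by simp, by simp, by simp, ?_⟩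
    · rw [h, hc, ← e1]; linear_combination huu
    · right; right; linear_combination -huu
  · have hu' := inv_case _ hzR.2.1 hc
    refine ⟨v, u + v, ?_, hv, huv0, huv2, by simp, by simp, ?_, by simp⟩
    · rw [hu', ← e1]; linear_combination hvv
    · right; right; linear_combination -hvv
  · have hq : u = (u + v) * α ^ R := by
      rw [h, hc, ← e2]
      field_simp
      linear_combination (-α ^ R) * CharTwo.add_self_eq_zero (1 : F9)
    refine ⟨u + v, u, hq, huv0, hu, huv1.symm, by simp, by simp, by simp, ?_⟩
    right; right; linear_combination -huu
  · have hu' := inv_case _ hR'.2.1 hc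
    have hq : v = (u + v) * α ^ R := by
      rw [hu', ← e2]
      field_simp
      linear_combination (-α ^ R) * CharTwo.add_self_eq_zero (1 : F9)
    refine ⟨u + v, v, hq, huv0, hv, huv2.symm, by simp, by simp, ?_, by simp⟩
    right; right; linear_combination -hvv

/-- The set of labels of the two-dimensional subspaces of `B`. -/
def Cl (α : F9) (B : Submodule (ZMod 2) F9) : Set ℕ :=
  {n | ∃ u ∈ B, ∃ v ∈ B, u ≠ 0 ∧ v ≠ 0 ∧ u ≠ v ∧ kap α u v = n}

theorem Cl_mulS_le {c : F9} (hc : c ≠ 0) {B : Submodule (ZMod 2) F9} : Cl α B ⊆ Cl α (mulS c B) := by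
  rintro n ⟨u, hu, v, hv, hu0, hv0, huv, rfl⟩
  refine ⟨c * u, mul_mem_mulS hu, c * v, mul_mem_mulS hv, mul_ne_zero hc hu0, mul_ne_zero hc hv0,
    fun h => huv (mul_left_cancel₀ hc h), ?_⟩
  rw [kap, kap, mul_div_mul_left _ _ hc]

theorem Cl_mulS {c : F9} (hc : c ≠ 0) {B : Submodule (ZMod 2) F9} : Cl α (mulS c B) = Cl α B := by
  refine Set.Subset.antisymm ?_ (Cl_mulS_le hc)
  conv_rhs => rw [mulS_inv hc (rfl : mulS c B = _)]
  exact Cl_mulS_le (inv_ne_zero hc)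

theorem Cl_rep (hα : α ^ 9 = α ^ 4 + 1) {B : Submodule (ZMod 2) F9} {n : ℕ} (h : n ∈ Cl α B) :
    ∃ c : F9, c ≠ 0 ∧ 1 ∈ mulS c B ∧ α ^ rep n ∈ mulS c B := by
  obtain ⟨u, hu, v, hv, hu0, hv0, huv, rfl⟩ := h
  obtain ⟨p, q, hq, hp0, -, -, hp, hq', -⟩ := kap_rep hα hu0 hv0 huv
  have hpB : p ∈ B := by rcases hp with rfl | rfl | rfl <;> first | assumption | exact B.add_mem hu hv
  have hqB : q ∈ B := by rcases hq' with rfl | rfl | rfl <;> first | assumption | exact B.add_mem hu hv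
  refine ⟨p⁻¹, inv_ne_zero hp0, ?_, ?_⟩
  · simpa [hp0] using mul_mem_mulS (c := p⁻¹) hpB
  · have := mul_mem_mulS (c := p⁻¹) hqB
    rwa [hq, inv_mul_cancel_left₀ hp0] at this

variable {g : F9} {𝓑 : Set (Submodule (ZMod 2) F9)}

theorem Cl_le (hα : α ^ 9 = α ^ 4 + 1) {B : Submodule (ZMod 2) F9} {n : ℕ} (h : n ∈ Cl α B) :
    rep n < 511 ∧ rep n ≠ 0 ∧ n ≤ 84 := by
  obtain ⟨u, hu, v, hv, hu0, hv0, huv, rfl⟩ := h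
  obtain ⟨i, hi, h0, h, hk⟩ := exists_log hα hu0 hv0 huv
  rw [hk]
  exact ⟨(clsTab_ok i hi h0).2.2.2.2.1.1, (clsTab_ok i hi h0).2.2.2.2.1.2, (clsTab_ok i hi h0).2.2.1⟩

theorem Cl_lt (h : IsCyclicTwoAnalog g 𝓑) (hSig : SigmaSet ⊆ 𝓑) (hα : α ^ 9 = α ^ 4 + 1)
    {B : Submodule (ZMod 2) F9} (hB : B ∈ 𝓑 \ SigmaSet) {n : ℕ} (hn : n ∈ Cl α B) : n < 84 := by
  refine lt_of_le_of_ne (Cl_le hα hn).2.2 ?_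
  rintro rfl
  obtain ⟨u, hu, v, hv, hu0, hv0, huv, hk'⟩ := hn
  obtain ⟨i, hi, h0, hvi, hk⟩ := exists_log hα hu0 hv0 huv
  have := (clsTab_ok i hi h0).2.2.2.1 (hk.symm.trans hk')
  refine huv (block_scattered h hSig hB hu hv hu0 hv0 ?_)
  rw [hvi, mul_div_cancel_left₀ _ hu0, K_iff hα]
  exact Nat.dvd_of_mod_eq_zero this

/-- Blocks sharing a label are multiples of each other, hence have the same labels. -/
theorem Cl_share (h : IsCyclicTwoAnalog g 𝓑) (hα : α ^ 9 = α ^ 4 + 1)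
    {B B' : Submodule (ZMod 2) F9} (hB : B ∈ 𝓑) (hB' : B' ∈ 𝓑) {n : ℕ} (hn : n ∈ Cl α B)
    (hn' : n ∈ Cl α B') : Cl α B = Cl α B' := by
  obtain ⟨c, hc, h1, h2⟩ := Cl_rep hα hn
  obtain ⟨c', hc', h1', h2'⟩ := Cl_rep hα hn'
  have hr := Cl_le hα hn
  have := block_unique h (mulS_mem h hc hB) (mulS_mem h hc' hB') one_ne_zero
    (pow_ne_zero _ (alpha_ne_zero hα)) (alpha_pow_ne_one hα hr.1 hr.2.1).symm h1 h2 h1' h2'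
  rw [← Cl_mulS hc, this, Cl_mulS hc']

/-- Two-dimensional subspaces of one block outside the spread with the same label coincide. -/
theorem same_line (h : IsCyclicTwoAnalog g 𝓑) (hSig : SigmaSet ⊆ 𝓑) (hα : α ^ 9 = α ^ 4 + 1)
    {B : Submodule (ZMod 2) F9} (hB : B ∈ 𝓑 \ SigmaSet) {u v u' v' : F9} (hu : u ∈ B) (hv : v ∈ B)
    (hu0 : u ≠ 0) (hv0 : v ≠ 0) (huv : u ≠ v) (hu' : u' ∈ B) (hv' : v' ∈ B)
    (hu0' : u' ≠ 0) (hv0' : v' ≠ 0) (huv' : u' ≠ v') (hk : kap α u v = kap α u' v') :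
    (u' = u ∨ u' = v ∨ u' = u + v) ∧ (v' = u ∨ v' = v ∨ v' = u + v) := by
  obtain ⟨p, q, hq, hp0, hq0, hpq, hp, hqm, -, -⟩ := kap_rep hα hu0 hv0 huv
  obtain ⟨p', q', hq', hp0', hq0', hpq', hp', hqm', hup', hvp'⟩ := kap_rep hα hu0' hv0' huv'
  have hpB : p ∈ B := by rcases hp with rfl | rfl | rfl <;> first | assumption | exact B.add_mem hu hv
  have hqB : q ∈ B := by rcases hqm with rfl | rfl | rfl <;> first | assumption | exact B.add_mem hu hv
  have hpB' : p' ∈ B := by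
    rcases hp' with rfl | rfl | rfl <;> first | assumption | exact B.add_mem hu' hv'
  have hqB' : q' ∈ B := by
    rcases hqm' with rfl | rfl | rfl <;> first | assumption | exact B.add_mem hu' hv'
  have hc : p' / p ≠ 0 := div_ne_zero hp0' hp0
  have m1 : p' ∈ mulS (p' / p) B := by
    have := mul_mem_mulS (c := p' / p) hpB
    rwa [div_mul_cancel₀ _ hp0] at this
  have m2 : q' ∈ mulS (p' / p) B := by
    have := mul_mem_mulS (c := p' / p) hqB
    rwa [hq, hk, ← mul_assoc, div_mul_cancel₀ _ hp0, ← hq'] at this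
  have e := block_unique h (mulS_mem h hc hB.1) hB.1 hp0' hq0' hpq' m1 m2 hpB' hqB'
  have e1 := mulS_free h hSig hB hc e
  have ep : p' = p := by rwa [div_eq_one_iff_eq hp0] at e1
  have eq : q' = q := by rw [hq', hq, hk, ep]
  have huu : u + u = 0 := CharTwo.add_self_eq_zero u
  have hvv : v + v = 0 := CharTwo.add_self_eq_zero v
  rw [ep, eq] at hup' hvp'
  clear hk hq hq' e e1 m1 m2
  grind

end classes

/-! ### Labels of a block -/

section labels

variable {α g : F9} {𝓑 : Set (Submodule (ZMod 2) F9)}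

theorem forceNat_eq {β : Type} (n : ℕ) (k : ℕ → β) : forceNat n k = k n := by
  cases n <;> rfl

theorem labs_eq (hα : α ^ 9 = α ^ 4 + 1) {j k : ℕ} (hj : j < 511) (hk : k < 511) (hj0 : j ≠ 0)
    (hk0 : k ≠ 0) (hjk : α ^ j ≠ α ^ k) :
    labs j k = [kap α 1 (α ^ j), kap α 1 (α ^ k), kap α (α ^ j) (α ^ k), kap α 1 (α ^ j + α ^ k),
      kap α (α ^ j) (1 + α ^ k), kap α (1 + α ^ j) (α ^ k), kap α (1 + α ^ j) (1 + α ^ k)] := by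
  have hp : ∀ n : ℕ, α ^ n ≠ 0 := fun n => pow_ne_zero n (alpha_ne_zero hα)
  have ksb : ∀ a < 511, ∀ b < 511, kap α (α ^ a) (α ^ b) = cls (sb b a) := fun a ha b _ =>
    kap_of_eq hα (hp a) (sb_lt b a) (by rw [pow_sb hα ha, mul_div_cancel₀ _ (hp a)])
  have k1 : ∀ a < 511, kap α 1 (α ^ a) = cls a := fun a ha =>
    kap_of_eq hα one_ne_zero ha (one_mul _).symm
  have zj := (zechTab_ok j hj hj0).2.1
  have zk := (zechTab_ok k hk hk0).2.1
  rw [one_add_pow hα hj hj0, one_add_pow hα hk hk0, ← pow_ad hα hj hjk, k1 j hj, k1 k hk,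
    ksb j hj k hk, k1 _ (ad_lt j k), ksb j hj _ zk, ksb _ zj k hk, ksb _ zj _ zk]
  simp only [labs, forceNat_eq]

/-- The list `labs j k` consists of the seven (distinct) labels of a block containing
`1`, `α ^ j` and `α ^ k`. -/
theorem labs_spec (h : IsCyclicTwoAnalog g 𝓑) (hSig : SigmaSet ⊆ 𝓑) (hα : α ^ 9 = α ^ 4 + 1)
    {B : Submodule (ZMod 2) F9} (hB : B ∈ 𝓑 \ SigmaSet) {j k : ℕ} (hj : j < 511) (hk : k < 511)
    (hj0 : j ≠ 0) (hk0 : k ≠ 0) (h1 : (1 : F9) ∈ B) (hx : α ^ j ∈ B) (hy : α ^ k ∈ B)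
    (hyx : α ^ k ≠ α ^ j) (hyx1 : α ^ k ≠ 1 + α ^ j) :
    (labs j k).Nodup ∧ ∀ n, n ∈ labs j k ↔ n ∈ Cl α B := by
  rw [labs_eq hα hj hk hj0 hk0 hyx.symm]
  have hx1 := alpha_pow_ne_one hα hj hj0
  have hy1 := alpha_pow_ne_one hα hk hk0
  have hx0 : α ^ j ≠ 0 := pow_ne_zero j (alpha_ne_zero hα)
  have hy0 : α ^ k ≠ 0 := pow_ne_zero k (alpha_ne_zero hα)
  generalize α ^ j = x at *
  generalize α ^ k = y at *
  have e1 : (1 : F9) + 1 = 0 := CharTwo.add_self_eq_zero 1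
  have ex : x + x = 0 := CharTwo.add_self_eq_zero x
  have ey : y + y = 0 := CharTwo.add_self_eq_zero y
  have n1 : (1 : F9) ≠ 0 := one_ne_zero
  have hxB1 := B.add_mem h1 hx
  have hyB1 := B.add_mem h1 hy
  have hxyB := B.add_mem hx hy
  have nx1 : 1 + x ≠ 0 := add_ne_zero' hx1.symm
  have ny1 : 1 + y ≠ 0 := add_ne_zero' hy1.symm
  have nxy : x + y ≠ 0 := add_ne_zero' hyx.symm
  have d1 : (1 : F9) ≠ x + y := by grind
  have d2 : x ≠ 1 + y := by grind
  have d3 : 1 + x ≠ y := by grind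
  have d4 : 1 + x ≠ 1 + y := by grind
  have sl := fun {u v u' v' : F9} => same_line h hSig hα hB (u := u) (v := v) (u' := u') (v' := v')
  constructor
  · simp only [List.nodup_cons, List.mem_cons, List.not_mem_nil, not_or, or_false, not_false_eq_true,
      List.nodup_nil, and_true]
    refine ⟨⟨?_, ?_, ?_, ?_, ?_, ?_⟩, ⟨?_, ?_, ?_, ?_, ?_⟩, ⟨?_, ?_, ?_, ?_⟩, ⟨?_, ?_, ?_⟩,
      ⟨?_, ?_⟩, ?_⟩
    all_goals
      intro hk'
      have := sl (by assumption) (by assumption) (by assumption) (by assumption)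
        (by first | assumption | (apply Ne.symm; assumption)) (by assumption) (by assumption)
        (by assumption) (by assumption)
        (by first | assumption | (apply Ne.symm; assumption)) hk'
      clear sl hk'
      grind
  · intro n
    constructor
    · intro hn
      simp only [List.mem_cons, List.not_mem_nil, or_false] at hn
      rcases hn with rfl | rfl | rfl | rfl | rfl | rfl | rfl
      all_goals
        exact ⟨_, by assumption, _, by assumption, by assumption, by assumption,
          by first | assumption | (apply Ne.symm; assumption), rfl⟩
    · rintro ⟨u, hu, v, hv, hu0, hv0, huv, rfl⟩
      have hu' := block_elems h hB.1 h1 hx hy n1 hx0 hx1.symm hy0 hy1 hyx hyx1 hu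
      have hv' := block_elems h hB.1 h1 hx hy n1 hx0 hx1.symm hy0 hy1 hyx hyx1 hv
      obtain ⟨a1, a2, a3, a4, a5⟩ := kap_six hα n1 hx0 hx1.symm (w := 1 + x) rfl
      obtain ⟨b1, b2, b3, b4, b5⟩ := kap_six hα n1 hy0 hy1.symm (w := 1 + y) rfl
      obtain ⟨c1, c2, c3, c4, c5⟩ := kap_six hα hx0 hy0 hyx.symm (w := x + y) rfl
      obtain ⟨l1, l2, l3, l4, l5⟩ := kap_six hα n1 nxy d1 (w := 1 + x + y) (by ring)
      obtain ⟨f1, f2, f3, f4, f5⟩ := kap_six hα hx0 ny1 d2 (w := 1 + x + y) (by ring)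
      obtain ⟨i1, i2, i3, i4, i5⟩ := kap_six hα nx1 hy0 d3 (w := 1 + x + y) rfl
      obtain ⟨j1, j2, j3, j4, j5⟩ := kap_six hα nx1 ny1 d4 (w := x + y)
        (by linear_combination -e1)
      rcases hu' with rfl | rfl | rfl | rfl | rfl | rfl | rfl | rfl <;>
      rcases hv' with rfl | rfl | rfl | rfl | rfl | rfl | rfl | rfl
      all_goals first
        | exact absurd rfl hu0
        | exact absurd rfl hv0
        | exact absurd rfl huv
        | simp only [List.mem_cons, true_or, or_true, *]

end labels

/-! ### Soundness of the search -/

section search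

theorem land_eq_zero_iff (a b : ℕ) :
    Nat.beq (Nat.land a b) 0 = true ↔ ∀ n, a.testBit n = true → b.testBit n = false := by
  rw [Nat.beq_eq]
  show a &&& b = 0 ↔ _
  constructor
  · intro h n ha
    have := congrArg (fun m => m.testBit n) h
    simpa [Nat.testBit_and, ha] using this
  · intro h
    refine Nat.eq_of_testBit_eq fun n => ?_
    rw [Nat.testBit_and, Nat.zero_testBit]
    cases ha : a.testBit n with
    | false => rfl
    | true => rw [h n ha]; rfl

theorem testBit_shift (c n : ℕ) : (Nat.shiftLeft 1 c).testBit n = decide (n = c) := by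
  show (1 <<< c).testBit n = _
  rw [Nat.shiftLeft_eq, one_mul, Nat.testBit_two_pow]
  simp [eq_comm]

theorem addLabs_spec (l : List ℕ) : ∀ f : ℕ, l.Nodup → (∀ n ∈ l, f.testBit n = false) →
    ∀ n, (addLabs l f).testBit n = (f.testBit n || decide (n ∈ l)) := by
  induction l with
  | nil => intro f _ _ n; simp [addLabs]
  | cons c l ih =>
    intro f hd hf n
    have hstep : addLabs (c :: l) f = addLabs l (Nat.lor f (Nat.shiftLeft 1 c)) := by
      have h0 : Nat.beq (Nat.land f (Nat.shiftLeft 1 c)) 0 = true := by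
        rw [land_eq_zero_iff]
        intro n hn
        rw [testBit_shift, decide_eq_false_iff_not]
        rintro rfl
        simp [hf n (by simp)] at hn
      show (forceNat (Nat.shiftLeft 1 c) fun b =>
        cond (Nat.beq (Nat.land f b) 0) (forceNat (Nat.lor f b) (addLabs l)) 0) = _
      rw [forceNat_eq, forceNat_eq, h0]
      rfl
    have hor : ∀ n, (Nat.lor f (Nat.shiftLeft 1 c)).testBit n = (f.testBit n || decide (n = c)) := by
      intro n
      rw [← testBit_shift]
      exact Nat.testBit_or _ _ _
    rw [List.nodup_cons] at hd
    rw [hstep, ih _ hd.2, hor]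
    · simp [Bool.or_assoc]
    · intro m hm
      rw [hor, hf m (List.mem_cons_of_mem _ hm)]
      have : m ≠ c := fun e => hd.1 (e ▸ hm)
      simp [this]

theorem base_testBit {i : ℕ} (hi : i ≤ 84) (n : ℕ) :
    (base i).testBit n = (decide (n = 84) || decide (n < i)) := by
  show (2 ^ 84 + (2 ^ i - 1)).testBit n = _
  have hlt : 2 ^ i - 1 < 2 ^ 84 := by
    have := Nat.pow_le_pow_right (n := 2) (by norm_num) hi
    have := Nat.two_pow_pos i
    omega
  rw [show 2 ^ 84 + (2 ^ i - 1) = 2 ^ 84 * 1 + (2 ^ i - 1) by ring, Nat.two_pow_add_eq_or_of_lt hlt,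
    Nat.testBit_or, mul_one, Nat.testBit_two_pow, Nat.testBit_two_pow_sub_one]
  simp [eq_comm]

theorem genRow_spec {β : Type} (i R n : ℕ) : ∀ acc : List ℕ, ∃ L : List ℕ,
    (∀ k : List ℕ → β, genRow i R n acc k = k L) ∧ (∀ a ∈ acc, a ∈ L) ∧
    ∀ m < n, cm i R m ≠ 0 → cm i R m ∈ L := by
  induction n with
  | zero => intro acc; exact ⟨acc, fun _ => rfl, fun _ h => h, by simp⟩
  | succ m ih =>
    intro acc
    have hstep : ∀ k : List ℕ → β, genRow i R (m + 1) acc k =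
        cond (Nat.beq (cm i R m) 0) (genRow i R m acc k) (genRow i R m (cm i R m :: acc) k) := by
      intro k
      show (forceNat (cm i R m) fun v => cond (Nat.beq v 0) (genRow i R m acc k)
        (genRow i R m (v :: acc) k)) = _
      rw [forceNat_eq]
    cases hb : Nat.beq (cm i R m) 0 with
    | true =>
      obtain ⟨L, h1, h2, h3⟩ := ih acc
      refine ⟨L, fun k => by rw [hstep, hb]; exact h1 k, h2, fun j hj h0 => ?_⟩
      rcases Nat.lt_succ_iff_lt_or_eq.mp hj with hj | rfl
      · exact h3 j hj h0
      · exact absurd (Nat.eq_of_beq_eq_true hb) h0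
    | false =>
      obtain ⟨L, h1, h2, h3⟩ := ih (cm i R m :: acc)
      refine ⟨L, fun k => by rw [hstep, hb]; exact h1 k,
        fun a ha => h2 a (List.mem_cons_of_mem _ ha), fun j hj h0 => ?_⟩
      rcases Nat.lt_succ_iff_lt_or_eq.mp hj with hj | rfl
      · exact h3 j hj h0
      · exact h2 _ (List.mem_cons_self ..)

theorem genAll_spec {β : Type} (n : ℕ) : ∀ acc : List ℕ, ∃ L : List ℕ,
    (∀ k : List ℕ → β, genAll n acc k = k L) ∧ (∀ a ∈ acc, a ∈ L) ∧
    ∀ i < n, ∀ m < 511, cm i (rep i) m ≠ 0 → cm i (rep i) m ∈ L := by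
  induction n with
  | zero => intro acc; exact ⟨acc, fun _ => rfl, fun _ h => h, by simp⟩
  | succ i ih =>
    intro acc
    obtain ⟨L1, h1, h2, h3⟩ := genRow_spec (β := β) i (rep i) 511 acc
    obtain ⟨L, g1, g2, g3⟩ := ih L1
    refine ⟨L, fun k => ?_, fun a ha => g2 a (h2 a ha), fun j hj m hm h0 => ?_⟩
    · show (forceNat (rep i) fun R => genRow i R 511 acc fun acc' => genAll i acc' k) = _
      rw [forceNat_eq, h1, g1]
    · rcases Nat.lt_succ_iff_lt_or_eq.mp hj with hj | rfl
      · exact g3 j hj m hm h0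
      · exact g2 _ (h3 m hm h0)

theorem filt_spec {β : Type} (x : ℕ) (l : List ℕ) : ∀ acc : List ℕ, ∃ L : List ℕ,
    (∀ k : List ℕ → β, filt x l acc k = k L) ∧ (∀ a ∈ acc, a ∈ L) ∧
    ∀ a ∈ l, Nat.beq (Nat.land a x) 0 = true → a ∈ L := by
  induction l with
  | nil => intro acc; exact ⟨acc, fun _ => rfl, fun _ h => h, by simp⟩
  | cons b l ih =>
    intro acc
    have hstep : ∀ k : List ℕ → β, filt x (b :: l) acc k =
        cond (Nat.beq (Nat.land b x) 0) (filt x l (b :: acc) k) (filt x l acc k) := fun _ => rfl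
    cases hb : Nat.beq (Nat.land b x) 0 with
    | false =>
      obtain ⟨L, h1, h2, h3⟩ := ih acc
      refine ⟨L, fun k => by rw [hstep, hb]; exact h1 k, h2, fun a ha h0 => ?_⟩
      rcases List.mem_cons.mp ha with rfl | ha
      · exact absurd (hb.symm.trans h0) (by decide)
      · exact h3 a ha h0
    | true =>
      obtain ⟨L, h1, h2, h3⟩ := ih (b :: acc)
      refine ⟨L, fun k => by rw [hstep, hb]; exact h1 k,
        fun a ha => h2 a (List.mem_cons_of_mem _ ha), fun a ha h0 => ?_⟩
      rcases List.mem_cons.mp ha with rfl | ha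
      · exact h2 _ (List.mem_cons_self ..)
      · exact h3 a ha h0

theorem loop_spec (pw : ℕ) (child : ℕ → ℕ → Option ℕ) (l : List ℕ) : ∀ s r, loop pw child l s = some r →
    ∀ a ∈ l, Nat.beq (Nat.land a pw) 0 = false → ∃ t r', child a t = some r' := by
  induction l with
  | nil => simp
  | cons b l ih =>
    intro s r hr a ha h0
    have hstep : loop pw child (b :: l) s = cond (Nat.beq (Nat.land b pw) 0) (loop pw child l s)
      (Option.rec none (fun s' => loop pw child l s') (child b s)) := rfl
    rw [hstep] at hr
    cases hb : Nat.beq (Nat.land b pw) 0 with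
    | true =>
      rw [hb] at hr
      rcases List.mem_cons.mp ha with rfl | ha
      · exact absurd (hb.symm.trans h0) (by decide)
      · exact ih s r hr a ha h0
    | false =>
      rw [hb] at hr
      cases hc : child b s with
      | none => rw [hc] at hr; cases hr
      | some s' =>
        rw [hc] at hr
        rcases List.mem_cons.mp ha with rfl | ha
        · exact ⟨s, s', hc⟩
        · exact ih s' r hr a ha h0

/-- Soundness of the exact cover search: if `M` is a partition of `{0, …, 83}` into sets encoded as
bit masks, every member of `M` is disjoint from or contained in `cov`, and those disjoint from it
are listed in `av`, then the search for a refutation fails. -/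
theorem go_sound {M : Set ℕ} (h1 : ∀ n < 84, ∃ m ∈ M, m.testBit n = true)
    (h2 : ∀ m ∈ M, ∀ m' ∈ M, ∀ n, m.testBit n = true → m'.testBit n = true → m = m') (fuel : ℕ) :
    ∀ cov av s r, (∀ m ∈ M, (∀ n, m.testBit n = true → cov.testBit n = false) ∨
        ∀ n, m.testBit n = true → cov.testBit n = true) →
      (∀ m ∈ M, (∀ n, m.testBit n = true → cov.testBit n = false) → m ∈ av) →
      go fuel cov av s ≠ some r := by
  induction fuel with
  | zero => intro _ _ _ _ _ _ h; cases h
  | succ fuel ih =>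
    intro cov av s r ha hb hgo
    have hstep : go (fuel + 1) cov av s =
      cond (Nat.blt (s % 128) 84) (cond (Nat.beq (Nat.land cov (Nat.shiftLeft 1 (s % 128))) 0)
        (loop (Nat.shiftLeft 1 (s % 128)) (fun a t => forceNat (Nat.lor cov a) fun cov' =>
          filt a av [] fun av' => go fuel cov' av' t) av (s / 128)) none) none := by
      show (forceNat (Nat.mod s 128) fun p => forceNat (Nat.shiftLeft 1 p) fun pw =>
        forceNat (Nat.div s 128) fun s' => cond (Nat.blt p 84) (cond (Nat.beq (Nat.land cov pw) 0)
        (loop pw (fun a t => forceNat (Nat.lor cov a) fun cov' =>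
          filt a av [] fun av' => go fuel cov' av' t) av s') none) none) = _
      rw [forceNat_eq, forceNat_eq, forceNat_eq]
      rfl
    rw [hstep] at hgo
    generalize s % 128 = p at hgo
    generalize s / 128 = s' at hgo
    cases hp : Nat.blt p 84 with
    | false => rw [hp] at hgo; cases hgo
    | true =>
    rw [hp] at hgo
    cases hc : Nat.beq (Nat.land cov (Nat.shiftLeft 1 p)) 0 with
    | false => rw [hc] at hgo; cases hgo
    | true =>
    rw [hc] at hgo
    have hcp : cov.testBit p = false := by
      rw [land_eq_zero_iff] at hc
      by_contra hne
      have := hc p (by simpa using hne)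
      simp at this
    obtain ⟨m, hm, hmp⟩ := h1 p (by simpa [Nat.blt_eq] using hp)
    have hmd : ∀ n, m.testBit n = true → cov.testBit n = false := by
      rcases ha m hm with h | h
      · exact h
      · have := h p hmp
        simp [hcp] at this
    have hmb : Nat.beq (Nat.land m (Nat.shiftLeft 1 p)) 0 = false := by
      by_contra hne
      rw [Bool.not_eq_false, land_eq_zero_iff] at hne
      have := hne p hmp
      simp at this
    obtain ⟨t, r', hchild⟩ := loop_spec _ _ _ _ _ hgo m (hb m hm hmd) hmb
    simp only [forceNat_eq] at hchild
    obtain ⟨av', k1, -, k3⟩ := filt_spec (β := Option ℕ) m av []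
    rw [k1] at hchild
    have hor : ∀ n, (Nat.lor cov m).testBit n = (cov.testBit n || m.testBit n) := fun n =>
      Nat.testBit_or _ _ _
    refine ih _ _ _ _ ?_ ?_ hchild
    · intro m' hm'
      by_cases hmm : m' = m
      · right
        intro n hn
        rw [hor, ← hmm, hn, Bool.or_true]
      · have hdis : ∀ n, m'.testBit n = true → m.testBit n = false := fun n hn => by
          by_contra hne
          exact hmm (h2 m' hm' m hm n hn (by simpa using hne))
        rcases ha m' hm' with h | h
        · left; intro n hn; rw [hor, h n hn, hdis n hn]; rfl
        · right; intro n hn; rw [hor, h n hn]; rfl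
    · intro m' hm' hd
      refine k3 m' (hb m' hm' fun n hn => ?_) ((land_eq_zero_iff _ _).mpr fun n hn => ?_)
      · have := hd n hn
        rw [hor, Bool.or_eq_false_iff] at this
        exact this.1
      · have := hd n hn
        rw [hor, Bool.or_eq_false_iff] at this
        exact this.2

theorem caseOK_sound {M : Set ℕ} (h1 : ∀ n < 84, ∃ m ∈ M, m.testBit n = true)
    (h2 : ∀ m ∈ M, ∀ m' ∈ M, ∀ n, m.testBit n = true → m'.testBit n = true → m = m')
    {L : List ℕ} (h3 : ∀ m ∈ M, m ∈ L) {r : ℕ} (hr2 : tmask r 2 ∈ M) (hr4 : tmask r 4 ∈ M) (s : ℕ) :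
    caseOK r L s = false := by
  by_contra hne
  rw [Bool.not_eq_false] at hne
  simp only [caseOK, forceNat_eq] at hne
  obtain ⟨av, k1, -, k3⟩ := filt_spec (β := Bool) (Nat.lor (tmask r 2) (tmask r 4)) L []
  rw [k1, Option.isSome_iff_exists] at hne
  obtain ⟨x, hx⟩ := hne
  have hor : ∀ n, (Nat.lor (tmask r 2) (tmask r 4)).testBit n =
      ((tmask r 2).testBit n || (tmask r 4).testBit n) := fun n => Nat.testBit_or _ _ _
  refine go_sound h1 h2 12 _ _ _ _ ?_ ?_ hx
  · intro m hm
    by_cases hm2 : m = tmask r 2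
    · right; intro n hn; rw [hor, ← hm2, hn]; rfl
    by_cases hm4 : m = tmask r 4
    · right; intro n hn; rw [hor, ← hm4, hn, Bool.or_true]
    left
    intro n hn
    rw [hor, Bool.or_eq_false_iff]
    constructor
    · by_contra hne
      exact hm2 (h2 m hm _ hr2 n hn (by simpa using hne))
    · by_contra hne
      exact hm4 (h2 m hm _ hr4 n hn (by simpa using hne))
  · intro m hm hd
    exact k3 m (h3 m hm) ((land_eq_zero_iff _ _).mpr hd)

end search

/-! ### The search -/

/-- Certificates for `caseOK`: the branching labels for the cases `r = 1, 3, 5, 11`. -/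
def certOf1 : ℕ := 7311288311976029508341006711256076908545083098142710708610471810558699250195306580619257704048945729156814299705616139947281041177560559630578286302433702812746339959137332039400101693106907819870178973666826328478852819838042715384729707021749230462740996266906316112184464649269307064454625563422429383947335461667469164186960834547820648881068704351371857083166224072619557267048498131425412750624855355473302292532625113524443668463082754327250728838121223540486897411643313562753763436916867793843804508337516927683048815412565913445859062712890889186503614752326571046084728599639882050904117514942515942063161315223351294943557498702172369806000365655312467615129784679234357198255475983912330567767305778836189014372058055005190611680887566645676901325071178092740586928365690845027328551368116993258422523190182234693585034742737602883468943045362282506939692742625510028429517521736967434824824862261884230739270847764138150710739527393316662721848292035558599479072967233970350604150627952330338688659822520168537709364611491705559224067125224850880497184386654292197978510071808203022262141050543939280295846388590889481126528448466426056231740617077413441951752271438843954432126328987689632827820598579840046136340977541531853517405301095248985444292162545276813277874389798470273541625277017553390704633345587764255989867967048499333574307755403232868678088300352877456928555971544278362461708432119313030872627092600589166509041977630697719270952438601766072317927639103631412176593107072983744193256486173405645851077189018228430524177961811825319282502953000522106957065706257786894619468023789148186316366326771525256269130880444753000723794856046818898552644549406576169061395938161514407630528033251409012514039462459596033797845337704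65130317841

/-- See `certOf1`. -/
def certOf3 : ℕ := 2084987122409091755731303174654352811464439927387396801956966060930449739316890533134675165636190773660230408516020281109397635670593176825917291362354998524403339630186684101129885479373619616721353312144472810844738672639240478050121423033316650964471261098694455500411049002687424945314662801270723666738227887676828115202460929819437938802706614060130721491196632647031337133075040107271202226594032203997195746529982009650002560513165758321138820641126949741519081906340481082038494711440388792270627169313371088486128641569022417906651881544524114256703931659009391260005229479084998345992438501306851222406423298967858624175637560034635193954711715655626217150231963089479942762884796102545624697720483626403558065283741613736354025110788810733631904568660387195158314349800814018266412185456007537438582055058054494774636382353105409486833514249893547955270473689726485156772189245632950906070411852301673327904042238360264402125369492167776773709380432850853361385280923247130413751214421523858882762172800594483674439494011919606259728014077302516864210236096986175516286423026176939722947624970655000737378736285860459121362629402596364477085037344066311687235252784250342697830452766740853109189596648885478677930094547456213825274537723155544558792724816777202626300474022149708403939168263591366869417467116269876217675129673199253663696568019291755534073211840764368270081577535318831932137953162106933149489353223400061860203623415822072629810790475847242677045212720628244636225966671619269570096289381415879350963057596321489914177895878921551449571790010464481060776232135764305835301786154914614032820524034860781612715376727301730584316123695454252765321843946999235862632539391063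4769014484120601077875277706590519041711323153782809972446604180325258178959400404104724860418260473116178858048987832249739843126210432148958147232499722952590053338411824059039219083966521143403982903579724058746727928567714355171019016234778

/-- See `certOf1`. -/
def certOf5 : ℕ := 5666866663760230938440063173922197753415436696319047501703424108436287750384378719739093262672799395143913262655179995233773831359913726120210467104265935824226490699514448105161909079730759950493167283844043957684167230532768195702315982190357397600276036029936261513722875108292823021643603768803799724708598438331153159873146145001587122285702653763395352001916194648579970002441307094305982594400437994453204069448395620982933530115502571806451305213837839599105508810406523606968907561263966133055718833574829275684909756224235818056462795120821320291311228598062038802985859697080197664906055899708263868048628614390174598363036793259482133468475737197774168035403513140564008715970219420791058472122481881655118079256067714029912870781999725051870094797795575356567866945510129098454807881489297262428718809227191333501233047833370176034517938005644094683771221261011185352336093550023935958965650360658760502342355319034078506207626357697495504874006936664035570492305610023103350190277769738569262532446990317274608205439813347540079620820915130625687540008046868762068498151769111412545918178024718247765945096261331791243523968629247035053187990255320648998382938629991340064135258276778230380894534598991415842584637669248355450773610310371368337789671103570390392248212845031133762177845109534275988392505075736496087530440173994572903249323467604291910914184115588234278193288431796459880490182622126149388594825074985369949009002898396194196577522939524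334575690361807592724031937459179174158080448729673129212803465973590539697768825885109841170651743871394427393671332431107563087240846767745884117892159547879449406248737429387621715163687001857974303933865827167087390949365374138328250096429548607820770400951039857508301763024853480995443409095266329801810274845861969432394045266317863649275062819053384676696987493904393480187112824367245

/-- See `certOf1`. -/
def certOf11 : ℕ := 1112707624782381188147056399721601437565828691806143511405207165998962037945570332675405874211009148335208628458102323734546991966608316897594182025474263928434178221289458952146006153308597360843130538658554398535699036944383944827660270572918855137121885582929563814352157372422657099791005435500680233696339064710957885657975099714175139225494009400701898123825553621855228965259358459434946407226729004699556283424393741031890316583232734730264471148886158185758413231276236615680070342459872138224320260949724037862236578796411188475831073317193699604807066071304827582619381974054025620671247692364283910399193224172257755138714256562060751378334683697166515082821939369355202797603893377065706859165127741311487972307131517077746074548262766544047287162589942384534213130536278860044528449422414084446167910130292988986140186474715184016105297225946226670986153943413456718611137252070131836150189382367989552551833229494312494925393919614871427952397442033074619433392510348572659889276988245283587719904568342929852517919181860728429897770499937512573114346071411864613176656080709570091020692749539403169270894909314184528206519711315140280499457740866302512054707558060644980658909634791603283839610358627629279676904576927145976420369449305163946395753637894676556561472554214497047046686266261508717150290253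62009325065020675011888870048012467891620903497514059869112145857849279077231439725636122098362029397234149251204590662535782280445900424012299341488157729005431381345030322789766286037867972983547338357687627997327836549744143225776080200836183238778408646262265439440050074917538720504321460241541674553997

/-- The exhaustive search: in none of the four cases the labels can be partitioned by masks of
possible blocks that include those of both types of blocks on the line. -/
theorem search_ok : genAll 84 [] (fun L =>
    cond (caseOK 1 L certOf1) (cond (caseOK 3 L certOf3) (cond (caseOK 5 L certOf5)
      (caseOK 11 L certOf11) false) false) false) = true := by
  decide +kernel

/-! ### Blocks as an exact cover of the labels -/

section masks

variable {α g : F9} {𝓑 : Set (Submodule (ZMod 2) F9)}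

/-- The bit masks of the label sets of the blocks outside the spread. -/
def Masks (α : F9) (𝓑 : Set (Submodule (ZMod 2) F9)) : Set ℕ :=
  {m | ∃ B ∈ 𝓑 \ SigmaSet, ∀ n, m.testBit n = true ↔ n ∈ Cl α B}

theorem repTab_ok : ∀ n < 84, rep n < 511 ∧ rep n ≠ 0 ∧ cls (rep n) = n ∧ rep n % 73 ≠ 0 := by
  decide +kernel

/-- A block outside the spread has a multiple `B'` containing `1` and `α ^ rep i`, where `i` is its
smallest label; with `k` the smallest logarithm of a vector of `B'` outside `⟨1, α ^ rep i⟩`, the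
mask of the block is `cm i (rep i) k`. -/
theorem mask_exists (h : IsCyclicTwoAnalog g 𝓑) (hSig : SigmaSet ⊆ 𝓑) (hα : α ^ 9 = α ^ 4 + 1)
    {B : Submodule (ZMod 2) F9} (hB : B ∈ 𝓑 \ SigmaSet) : ∃ i < 84, ∃ k < 511, cm i (rep i) k ≠ 0 ∧
      ∀ n, (cm i (rep i) k).testBit n = true ↔ n ∈ Cl α B := by
  classical
  have hp : ∀ n : ℕ, α ^ n ≠ 0 := fun n => pow_ne_zero n (alpha_ne_zero hα)
  have hbig : ∀ {B : Submodule (ZMod 2) F9}, B ∈ 𝓑 → ∀ s : Finset F9, s.card < 8 →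
      ∃ u ∈ B, u ∉ s :=
    fun hB s hs => exists_notin h hB s hs
  have hne : (Cl α B).Nonempty := by
    obtain ⟨u, hu, hu0⟩ := hbig hB.1 {0} (by simp)
    obtain ⟨v, hv, hv0⟩ := hbig hB.1 {0, u} (lt_of_le_of_lt Finset.card_le_two (by norm_num))
    simp only [Finset.mem_insert, Finset.mem_singleton, not_or] at hu0 hv0
    exact ⟨_, u, hu, v, hv, hu0, hv0.1, Ne.symm hv0.2, rfl⟩
  have hi := Nat.sInf_mem hne
  have hmin : ∀ n ∈ Cl α B, sInf (Cl α B) ≤ n := fun n hn => Nat.sInf_le hn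
  generalize sInf (Cl α B) = i at hi hmin
  have hi84 := Cl_lt h hSig hα hB hi
  obtain ⟨c, hc, h1, hx⟩ := Cl_rep hα hi
  have hlt : ∀ n ∈ Cl α B, n < 84 := fun n hn => Cl_lt h hSig hα hB hn
  have hB' := mulS_mem_diff h hc hB
  rw [← Cl_mulS hc] at hmin hlt ⊢
  generalize mulS c B = B' at *
  obtain ⟨hR, hR0, -, -⟩ := repTab_ok i hi84
  generalize hRi : rep i = R at *
  have hx1 : α ^ R ≠ 1 := alpha_pow_ne_one hα hR hR0
  have hSne : {k | k < 511 ∧ α ^ k ∈ B' ∧ α ^ k ≠ 1 ∧ α ^ k ≠ α ^ R ∧ α ^ k ≠ 1 + α ^ R}.Nonempty := by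
    obtain ⟨u, hu, hu'⟩ := hbig hB'.1 {0, 1, α ^ R, 1 + α ^ R}
      (lt_of_le_of_lt Finset.card_le_four (by norm_num))
    simp only [Finset.mem_insert, Finset.mem_singleton, not_or] at hu'
    obtain ⟨k, hk, rfl⟩ := alpha_surj hα hu'.1
    exact ⟨k, hk, hu, hu'.2⟩
  have hk := Nat.sInf_mem hSne
  have hkmin : ∀ k', k' < 511 ∧ α ^ k' ∈ B' ∧ α ^ k' ≠ 1 ∧ α ^ k' ≠ α ^ R ∧ α ^ k' ≠ 1 + α ^ R →
    _ ≤ k' := fun k' hk' => Nat.sInf_le (s := {k | k < 511 ∧ α ^ k ∈ B' ∧ α ^ k ≠ 1 ∧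
      α ^ k ≠ α ^ R ∧ α ^ k ≠ 1 + α ^ R}) hk'
  generalize sInf {k | k < 511 ∧ α ^ k ∈ B' ∧ α ^ k ≠ 1 ∧ α ^ k ≠ α ^ R ∧ α ^ k ≠ 1 + α ^ R} = k at hk hkmin
  obtain ⟨hk511, hy, hy1, hyx, hyx1⟩ := hk
  have hk0 : k ≠ 0 := by rintro rfl; exact hy1 (pow_zero α)
  obtain ⟨hnd, hlabs⟩ := labs_spec h hSig hα hB' hR hk511 hR0 hk0 h1 hx hy hyx hyx1
  have e1 : (1 : F9) + 1 = 0 := CharTwo.add_self_eq_zero 1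
  have ex : α ^ R + α ^ R = 0 := CharTwo.add_self_eq_zero _
  have ey : α ^ k + α ^ k = 0 := CharTwo.add_self_eq_zero _
  have n1 : (1 : F9) ≠ 0 := one_ne_zero
  have lt_of : ∀ k' < 511, α ^ k' ∈ B' → α ^ k' ≠ α ^ k → α ^ k' ≠ 1 → α ^ k' ≠ α ^ R →
      α ^ k' ≠ 1 + α ^ R → k < k' := by
    intro k' hk' hm hne a1 a2 a3
    refine lt_of_le_of_ne (hkmin k' ⟨hk', hm, a1, a2, a3⟩) ?_
    rintro rfl
    exact hne rfl
  have hcanon : canon R k = true := by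
    have hs := pow_ad hα hR hyx.symm
    have hs0 : ad R k ≠ 0 := by
      intro h0
      rw [h0, pow_zero] at hs
      exact hyx1 (by linear_combination -hs - ex)
    have t1 : k < zech k := by
      have hz := (one_add_pow hα hk511 hk0).symm
      have hx0 := hp R
      have hy0 := hp k
      refine lt_of _ (zechTab_ok k hk511 hk0).2.1 ?_ ?_ ?_ ?_ ?_ <;> rw [hz]
      · exact B'.add_mem h1 hy
      all_goals grind
    have t2 : k < ad R k := by
      have hx0 := hp R
      have hy0 := hp k
      refine lt_of _ (ad_lt _ _) ?_ ?_ ?_ ?_ ?_ <;> rw [hs]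
      · exact B'.add_mem hx hy
      all_goals grind
    have t3 : k < zech (ad R k) := by
      have hz := (one_add_pow hα (ad_lt R k) hs0).symm
      rw [hs] at hz
      have hx0 := hp R
      have hy0 := hp k
      refine lt_of _ (zechTab_ok _ (ad_lt R k) hs0).2.1 ?_ ?_ ?_ ?_ ?_ <;> rw [hz]
      · exact B'.add_mem h1 (B'.add_mem hx hy)
      all_goals grind
    simp only [canon, forceNat_eq, Nat.blt_eq.mpr t1, Nat.blt_eq.mpr t2, Nat.blt_eq.mpr t3, cond_true]
  have hf := addLabs_spec (labs R k) (base i) hnd (fun n hn => by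
    have hn' := (hlabs n).mp hn
    have q1 := hmin n hn'
    have q2 := hlt n hn'
    rw [base_testBit hi84.le]
    simp; omega)
  have hcm : cm i R k = Nat.xor (addLabs (labs R k) (base i)) (base i) := by
    have hb : Nat.beq (addLabs (labs R k) (base i)) 0 = false := by
      by_contra hne
      rw [Bool.not_eq_false] at hne
      have := hf 84
      rw [Nat.eq_of_beq_eq_true hne, base_testBit hi84.le] at this
      simp at this
    simp only [cm, forceNat_eq, hcanon, hb, cond_true, cond_false]
  have hbits : ∀ n, (cm i R k).testBit n = true ↔ n ∈ Cl α B' := by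
    intro n
    rw [hcm]
    show (addLabs (labs R k) (base i) ^^^ base i).testBit n = true ↔ _
    rw [Nat.testBit_xor, hf, base_testBit hi84.le, ← hlabs]
    by_cases hn : n ∈ labs R k
    · have hn' := (hlabs n).mp hn
      have q1 := hmin n hn'
      have q2 := hlt n hn'
      have q3 : ¬ n < i := by omega
      have q4 : n ≠ 84 := by omega
      simp [hn, q3, q4]
    · simp [hn]
  refine ⟨i, hi84, k, hk511, ?_, ?_⟩
  · rw [hRi]
    intro h0
    have := (hbits _).mpr ((hlabs (cls R)).mp (by simp [labs, forceNat_eq]))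
    simp [h0] at this
  · rw [hRi]; exact hbits

theorem masks_cover (h : IsCyclicTwoAnalog g 𝓑) (hSig : SigmaSet ⊆ 𝓑) (hα : α ^ 9 = α ^ 4 + 1) :
    ∀ n < 84, ∃ m ∈ Masks α 𝓑, m.testBit n = true := by
  intro n hn
  obtain ⟨hR, hR0, hcls, h73⟩ := repTab_ok n hn
  have hx1 := alpha_pow_ne_one hα hR hR0
  have hx0 : α ^ rep n ≠ 0 := pow_ne_zero _ (alpha_ne_zero hα)
  obtain ⟨B, hB, h1, hx⟩ := block_exists h one_ne_zero hx0 hx1.symm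
  have hB' : B ∈ 𝓑 \ SigmaSet := by
    refine ⟨hB, ?_⟩
    rintro ⟨z, hz, he⟩
    have m1 : (1 : F9) ∈ pt z := he ▸ h1
    have m2 : α ^ rep n ∈ pt z := he ▸ hx
    rw [mem_pt hz] at m1 m2
    have := K_mul m2 (K_inv m1)
    rw [show α ^ rep n / z * (1 / z)⁻¹ = α ^ rep n by field_simp, K_iff hα] at this
    omega
  obtain ⟨i, -, k, -, -, hm⟩ := mask_exists h hSig hα hB'
  refine ⟨_, ⟨B, hB', hm⟩, (hm n).mpr ⟨1, h1, _, hx, one_ne_zero, hx0, hx1.symm, ?_⟩⟩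
  rw [kap_of_eq hα one_ne_zero hR (one_mul _).symm, hcls]

theorem masks_disjoint (h : IsCyclicTwoAnalog g 𝓑) (hα : α ^ 9 = α ^ 4 + 1) :
    ∀ m ∈ Masks α 𝓑, ∀ m' ∈ Masks α 𝓑, ∀ n, m.testBit n = true → m'.testBit n = true → m = m' := by
  rintro m ⟨B, hB, hm⟩ m' ⟨B', hB', hm'⟩ n hn hn'
  have := Cl_share h hα hB.1 hB'.1 ((hm n).mp hn) ((hm' n).mp hn')
  refine Nat.eq_of_testBit_eq fun j => ?_
  rw [Bool.eq_iff_iff, hm, hm', this]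

theorem masks_mem (h : IsCyclicTwoAnalog g 𝓑) (hSig : SigmaSet ⊆ 𝓑) (hα : α ^ 9 = α ^ 4 + 1) :
    ∀ m ∈ Masks α 𝓑, ∃ i < 84, ∃ k < 511, cm i (rep i) k ≠ 0 ∧ m = cm i (rep i) k := by
  rintro m ⟨B, hB, hm⟩
  obtain ⟨i, hi, k, hk, h0, hm'⟩ := mask_exists h hSig hα hB
  refine ⟨i, hi, k, hk, h0, Nat.eq_of_testBit_eq fun j => ?_⟩
  rw [Bool.eq_iff_iff, hm, hm']

theorem tnum_ok : ∀ r ∈ [1, 3, 5, 11], ∀ e ∈ [2, 4], tj r e ≠ 0 ∧ tk r e ≠ 0 ∧ tk r e ≠ tj r e ∧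
    tk r e ≠ zech (tj r e) ∧ r % 511 ≠ 0 ∧ (r + 73) % 511 ≠ (73 * e) % 511 ∧
    (r + 146) % 511 ≠ (146 * e % 511) % 511 ∧ r + 146 < 511 := by
  decide +kernel

theorem tmask_mem (h : IsCyclicTwoAnalog g 𝓑) (hSig : SigmaSet ⊆ 𝓑) (hα : α ^ 9 = α ^ 4 + 1)
    {B : Submodule (ZMod 2) F9} (hB : B ∈ 𝓑 \ SigmaSet) {r e : ℕ} (hr : r ∈ [1, 3, 5, 11])
    (he : e ∈ [2, 4]) (hm : ∀ t ∈ Kset, t * α ^ r + t ^ e ∈ B) : tmask r e ∈ Masks α 𝓑 := by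
  obtain ⟨a1, a2, a3, a4, a5, a6, a7, a8⟩ := tnum_ok r hr e he
  have hp : ∀ n : ℕ, α ^ n ≠ 0 := fun n => pow_ne_zero n (alpha_ne_zero hα)
  have m0 : α ^ ad r 0 ∈ B := by
    rw [pow_ad hα (by omega) (fun h => a5 (pow_inj hα h))]
    simpa using hm 1 K_one
  have m1 : α ^ ad (r + 73) (73 * e) ∈ B := by
    rw [pow_ad hα (by omega) (fun h => a6 (pow_inj hα h))]
    have := hm (α ^ 73) ((K_iff hα).mpr (dvd_refl _))
    rwa [← pow_mul, ← pow_add, add_comm 73 r] at this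
  have m2 : α ^ ad (r + 146) (146 * e % 511) ∈ B := by
    rw [pow_ad hα (by omega) (fun h => a7 (pow_inj hα h)), pow_mod hα]
    have := hm (α ^ 146) ((K_iff hα).mpr (by norm_num))
    rwa [← pow_mul, ← pow_add, add_comm 146 r] at this
  have hc : (α ^ ad r 0)⁻¹ ≠ 0 := inv_ne_zero (hp _)
  have hB' := mulS_mem_diff h hc hB
  have s0 := mul_mem_mulS (c := (α ^ ad r 0)⁻¹) m0
  have s1 := mul_mem_mulS (c := (α ^ ad r 0)⁻¹) m1
  have s2 := mul_mem_mulS (c := (α ^ ad r 0)⁻¹) m2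
  rw [inv_mul_cancel₀ (hp _)] at s0
  rw [mul_comm, ← div_eq_mul_inv, ← pow_sb hα (ad_lt _ _)] at s1 s2
  have hj : tj r e < 511 := sb_lt _ _
  have hk : tk r e < 511 := sb_lt _ _
  obtain ⟨hnd, hl⟩ := labs_spec h hSig hα hB' hj hk a1 a2 s0 s1 s2
    (fun h => a3 (by have := pow_inj hα h; rwa [Nat.mod_eq_of_lt hk, Nat.mod_eq_of_lt hj] at this))
    (fun h => a4 (by
      have hz := zechTab_ok _ hj a1
      rw [one_add_pow hα hj a1] at h
      have := pow_inj hα h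
      rwa [Nat.mod_eq_of_lt hk, Nat.mod_eq_of_lt hz.2.1] at this))
  refine ⟨_, hB', fun n => ?_⟩
  rw [tmask, addLabs_spec _ _ hnd (by simp), ← hl]
  simp

/-- The two types of scattered blocks on a line of `PG(2,8)` cannot occur together, for the lines
spanned by `α ^ r` and `1` with `r = 1, 3, 5, 11`. -/
theorem no_two (h : IsCyclicTwoAnalog g 𝓑) (hSig : SigmaSet ⊆ 𝓑) (hα : α ^ 9 = α ^ 4 + 1)
    {B B' : Submodule (ZMod 2) F9} (hB : B ∈ 𝓑 \ SigmaSet) (hB' : B' ∈ 𝓑 \ SigmaSet) {r : ℕ}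
    (hr : r ∈ [1, 3, 5, 11]) (h2 : ∀ t ∈ Kset, t * α ^ r + t ^ 2 ∈ B)
    (h4 : ∀ t ∈ Kset, t * α ^ r + t ^ 4 ∈ B') : False := by
  have M2 := tmask_mem h hSig hα hB hr (by simp) h2
  have M4 := tmask_mem h hSig hα hB' hr (by simp) h4
  obtain ⟨L, hL, -, hmem⟩ := genAll_spec (β := Bool) 84 []
  have hcase := fun s => caseOK_sound (masks_cover h hSig hα) (masks_disjoint h hα) (L := L)
    (fun m hm => by
      obtain ⟨i, hi, k, hk, h0, rfl⟩ := masks_mem h hSig hα m hm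
      exact hmem i hi k hk h0) M2 M4 s
  have hok := search_ok
  rw [hL] at hok
  simp only [List.mem_cons, List.not_mem_nil, or_false] at hr
  rcases hr with rfl | rfl | rfl | rfl
  · rw [hcase] at hok; cases hok
  · rw [hcase certOf3] at hok; cases hc : caseOK 1 L certOf1 <;> rw [hc] at hok <;> cases hok
  · rw [hcase certOf5] at hok
    cases hc : caseOK 1 L certOf1 <;> cases hc' : caseOK 3 L certOf3 <;> rw [hc, hc'] at hok <;>
      cases hok
  · rw [hcase certOf11] at hok
    cases hc : caseOK 1 L certOf1 <;> cases hc' : caseOK 3 L certOf3 <;>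
      cases hc'' : caseOK 5 L certOf5 <;> rw [hc, hc', hc''] at hok <;> cases hok

end masks

/-! ### Lines of `PG(2,8)` -/

section lines

variable {g : F9} {𝓑 : Set (Submodule (ZMod 2) F9)}

theorem K_pow_seven {a : F9} (ha : a ∈ Kset) (h0 : a ≠ 0) : a ^ 7 = 1 := by
  simp only [Kset, Set.mem_ofPred_eq] at ha
  exact mul_right_cancel₀ h0 (by rw [← pow_succ, ha, one_mul])

theorem K_indep {P Q a b : F9} (hP : P ≠ 0) (hQP : Q / P ∉ Kset) (ha : a ∈ Kset) (hb : b ∈ Kset)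
    (h : a * P + b * Q = 0) : a = 0 ∧ b = 0 := by
  have hb0 : b = 0 := by
    by_contra hb0
    apply hQP
    have : Q / P = a * b⁻¹ := by
      field_simp
      rw [CharTwo.add_eq_zero] at h
      linear_combination -h
    rw [this]
    exact K_mul ha (K_inv hb)
  rw [hb0, zero_mul, add_zero] at h
  exact ⟨(mul_eq_zero.mp h).resolve_right hP, hb0⟩

theorem not_K_symm {P Q : F9} (h : Q / P ∉ Kset) : P / Q ∉ Kset := fun h' => h (by
  have := K_inv h'
  rwa [inv_div] at this)

/-- The `K`-span of `P` and `Q`. -/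
def Kspan (P Q : F9) : Set F9 := {z | ∃ a ∈ Kset, ∃ b ∈ Kset, z = a * P + b * Q}

theorem Kspan_add {P Q u v : F9} (hu : u ∈ Kspan P Q) (hv : v ∈ Kspan P Q) : u + v ∈ Kspan P Q := by
  obtain ⟨a, ha, b, hb, rfl⟩ := hu
  obtain ⟨c, hc, d, hd, rfl⟩ := hv
  exact ⟨a + c, K_add ha hc, b + d, K_add hb hd, by ring⟩

theorem Kspan_mul {P Q k u : F9} (hk : k ∈ Kset) (hu : u ∈ Kspan P Q) : k * u ∈ Kspan P Q := by
  obtain ⟨a, ha, b, hb, rfl⟩ := hu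
  exact ⟨k * a, K_mul hk ha, k * b, K_mul hk hb, by ring⟩

theorem left_mem_Kspan (P Q : F9) : P ∈ Kspan P Q := ⟨1, K_one, 0, K_zero, by ring⟩

theorem right_mem_Kspan (P Q : F9) : Q ∈ Kspan P Q := ⟨0, K_zero, 1, K_one, by ring⟩

theorem card_Kspan {P Q : F9} (hP : P ≠ 0) (hQP : Q / P ∉ Kset) : (Kspan P Q).ncard = 64 := by
  have him : Kspan P Q = (fun p : F9 × F9 => p.1 * P + p.2 * Q) '' (Kset ×ˢ Kset) := by
    ext z
    constructor
    · rintro ⟨a, ha, b, hb, rfl⟩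
      exact ⟨(a, b), ⟨ha, hb⟩, rfl⟩
    · rintro ⟨⟨a, b⟩, ⟨ha, hb⟩, rfl⟩
      exact ⟨a, ha, b, hb, rfl⟩
  rw [him, Set.InjOn.ncard_image, Set.ncard_prod, ← Nat.card_coe_set_eq, card_K]
  rintro ⟨a, b⟩ ⟨ha, hb⟩ ⟨c, d⟩ ⟨hc, hd⟩ he
  simp only at he ha hb hc hd
  obtain ⟨h1, h2⟩ := K_indep hP hQP (K_add ha hc) (K_add hb hd) (by
    rw [← CharTwo.add_eq_zero] at he
    linear_combination he)
  rw [CharTwo.add_eq_zero] at h1 h2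
  rw [h1, h2]

theorem exists_theta : ∃ θ ∈ Kset, θ ^ 3 = θ + 1 := by
  obtain ⟨α, hα⟩ := exists_root
  -- among the generators of `K^*`, three satisfy `θ ^ 3 = θ + 1` and three `θ ^ 3 = θ ^ 2 + 1`
  have key : ∃ i < 511, 73 ∣ i ∧ i ≠ 0 ∧ (3 * i) % 511 = zech i := by decide +kernel
  obtain ⟨i, hi, hd, h0, he⟩ := key
  refine ⟨α ^ i, (K_iff hα).mpr hd, ?_⟩
  rw [add_comm, one_add_pow hα hi h0, ← he, pow_mod hα, ← pow_mul, mul_comm]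

theorem K_elems {θ : F9} (h3 : θ ^ 3 = θ + 1) {t : F9} (ht : t ∈ Kset) :
    t = 0 ∨ t = 1 ∨ t = θ ∨ t = 1 + θ ∨ t = θ ^ 2 ∨ t = 1 + θ ^ 2 ∨ t = θ + θ ^ 2 ∨
      t = 1 + θ + θ ^ 2 := by
  have h2 : (2 : F9) = 0 := CharTwo.two_eq_zero
  simp only [Kset, Set.mem_ofPred_eq] at ht
  have : t * (t + 1) * (t + θ) * (t + (1 + θ)) * (t + θ ^ 2) * (t + (1 + θ ^ 2)) *
      (t + (θ + θ ^ 2)) * (t + (1 + θ + θ ^ 2)) = 0 := by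
    grind
  simpa [CharTwo.add_eq_zero, mul_eq_zero, or_assoc] using this

end lines

/-! ### Additive maps on `K` -/

section normalform

theorem sum_K_pow {θ : F9} (hθ : θ ∈ Kset) (hθ0 : θ ≠ 0) {s : Finset F9}
    (hs : ∀ t, t ∈ s ↔ t ∈ Kset ∧ t ≠ 0) {n : ℕ} (hn : θ ^ n ≠ 1) : ∑ t ∈ s, t ^ n = 0 := by
  have : ∑ t ∈ s, t ^ n = θ ^ n * ∑ t ∈ s, t ^ n := by
    rw [Finset.mul_sum]
    symm
    refine Finset.sum_bij (fun t _ => θ * t) ?_ ?_ ?_ ?_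
    · intro t ht
      rw [hs] at ht ⊢
      exact ⟨K_mul hθ ht.1, mul_ne_zero hθ0 ht.2⟩
    · intro t _ t' _ h
      exact mul_left_cancel₀ hθ0 h
    · intro t ht
      rw [hs] at ht
      exact ⟨θ⁻¹ * t, (hs _).mpr ⟨K_mul (K_inv hθ) ht.1, mul_ne_zero (inv_ne_zero hθ0) ht.2⟩,
        mul_inv_cancel_left₀ hθ0 t⟩
    · intro t _
      rw [mul_pow]
  by_contra h0
  exact hn (mul_right_cancel₀ h0 (by rw [← this, one_mul]))

/-- An additive map `f` on `K` with `t ↦ f t / t` an injective map from `K^*` to itself is of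
the form `b t ^ 2` or `c t ^ 4`: writing `f t = a t + b t ^ 2 + c t ^ 4`, summing `f t / t` over
`K^*` gives `a = 0`, and `b + c t ^ 2` has no zero on `K^*`. -/
theorem additive_form {f : F9 → F9} (hfK : ∀ t ∈ Kset, f t ∈ Kset)
    (hadd : ∀ t ∈ Kset, ∀ t' ∈ Kset, f (t + t') = f t + f t') (hf0 : ∀ t ∈ Kset, t ≠ 0 → f t ≠ 0)
    (hinj : ∀ t ∈ Kset, ∀ t' ∈ Kset, t ≠ 0 → t' ≠ 0 → f t / t = f t' / t' → t = t') :
    (∃ b ∈ Kset, b ≠ 0 ∧ ∀ t ∈ Kset, f t = b * t ^ 2) ∨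
      ∃ c ∈ Kset, c ≠ 0 ∧ ∀ t ∈ Kset, f t = c * t ^ 4 := by
  classical
  have : Fintype F9 := Fintype.ofFinite _
  obtain ⟨θ, hθ, h3⟩ := exists_theta
  have h2 : (2 : F9) = 0 := CharTwo.two_eq_zero
  have hθ0 : θ ≠ 0 := by rintro rfl; norm_num at h3
  have hθ1 : θ ≠ 1 := by rintro rfl; simp [CharTwo.add_self_eq_zero] at h3
  have hz : f 0 = 0 := by
    have := hadd 0 K_zero 0 K_zero
    rw [add_zero] at this
    simpa using this
  -- `1, θ ^ 2, θ` is the trace-dual basis of `1, θ, θ ^ 2`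
  obtain ⟨a, b, c, hb, hc, hf⟩ : ∃ a b c : F9, b ∈ Kset ∧ c ∈ Kset ∧
      ∀ t ∈ Kset, f t = a * t + b * t ^ 2 + c * t ^ 4 := by
    have k2 := K_pow hθ 2
    have k4 := K_pow hθ 4
    have m1 := hfK 1 K_one
    have mθ := hfK θ hθ
    have m2 := hfK _ k2
    refine ⟨f 1 + θ ^ 2 * f θ + θ * f (θ ^ 2), f 1 + θ ^ 4 * f θ + θ ^ 2 * f (θ ^ 2),
      f 1 + θ * f θ + θ ^ 4 * f (θ ^ 2), K_add (K_add m1 (K_mul k4 mθ)) (K_mul k2 m2),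
      K_add (K_add m1 (K_mul hθ mθ)) (K_mul k4 m2), fun t ht => ?_⟩
    have a1 := hadd 1 K_one θ hθ
    have a2 := hadd 1 K_one _ k2
    have a3 := hadd θ hθ _ k2
    have a4 := hadd _ (K_add K_one hθ) _ k2
    rw [a1] at a4
    generalize hA : f 1 = A at *
    generalize hB : f θ = B at *
    generalize hC : f (θ ^ 2) = C at *
    rcases K_elems h3 ht with rfl | rfl | rfl | rfl | rfl | rfl | rfl | rfl
    · rw [hz]; ring
    · rw [hA]; clear hadd hfK hf0 hinj; grind
    · rw [hB]; clear hadd hfK hf0 hinj; grind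
    · rw [a1]; clear hadd hfK hf0 hinj; grind
    · rw [hC]; clear hadd hfK hf0 hinj; grind
    · rw [a2]; clear hadd hfK hf0 hinj; grind
    · rw [a3]; clear hadd hfK hf0 hinj; grind
    · rw [a4]; clear hadd hfK hf0 hinj; grind
  let s : Finset F9 := Finset.univ.filter fun t => t ∈ Kset ∧ t ≠ 0
  have hs : ∀ t, t ∈ s ↔ t ∈ Kset ∧ t ≠ 0 := fun t => by simp [s]
  have hcard : s.card = 7 := by
    have h1 : (insert 0 s : Finset F9).card = 8 := by
      rw [← Set.ncard_coe_finset, ← card_K, Nat.card_coe_set_eq]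
      congr 1
      ext t
      by_cases h0 : t = 0
      · simp [h0, K_zero]
      · simp [hs, h0]
    rw [Finset.card_insert_of_notMem (by simp [s])] at h1
    omega
  have himg : s.image (fun t => f t / t) = s := by
    refine Finset.eq_of_subset_of_card_le ?_ ?_
    · intro y hy
      obtain ⟨t, ht, rfl⟩ := Finset.mem_image.mp hy
      rw [hs] at ht ⊢
      exact ⟨by rw [div_eq_mul_inv]; exact K_mul (hfK t ht.1) (K_inv ht.1),
        div_ne_zero (hf0 t ht.1 ht.2) ht.2⟩
    · rw [Finset.card_image_of_injOn]
      intro t ht t' ht' he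
      have ht := (hs t).mp ht
      have ht' := (hs t').mp ht'
      exact hinj t ht.1 t' ht'.1 ht.2 ht'.2 he
  have hsum : ∑ t ∈ s, f t / t = ∑ t ∈ s, t := by
    conv_rhs => rw [← himg]
    rw [Finset.sum_image]
    intro t ht t' ht' he
    have ht := (hs t).mp ht
    have ht' := (hs t').mp ht'
    exact hinj t ht.1 t' ht'.1 ht.2 ht'.2 he
  have s1 : ∑ t ∈ s, t = 0 := by
    simpa using sum_K_pow hθ hθ0 hs (n := 1) (by simpa using hθ1)
  have s3 : ∑ t ∈ s, t ^ 3 = 0 := sum_K_pow hθ hθ0 hs (by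
    rw [h3]; simpa using hθ0)
  have ha : a = 0 := by
    have : ∑ t ∈ s, f t / t = ∑ t ∈ s, (a + b * t + c * t ^ 3) := by
      refine Finset.sum_congr rfl fun t ht => ?_
      obtain ⟨hK, h0⟩ := (hs t).mp ht
      rw [hf t hK]
      field_simp
    rw [hsum, s1, Finset.sum_add_distrib, Finset.sum_add_distrib, ← Finset.mul_sum,
      ← Finset.mul_sum, s1, s3, Finset.sum_const, hcard] at this
    simp only [nsmul_eq_mul, mul_zero, add_zero] at this
    push_cast at this
    linear_combination -this - 3 * a * h2
  subst ha
  by_cases hb0 : b = 0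
  · subst hb0
    refine Or.inr ⟨c, hc, ?_, fun t ht => by rw [hf t ht]; ring⟩
    rintro rfl
    exact hf0 1 K_one one_ne_zero (by rw [hf 1 K_one]; ring)
  by_cases hc0 : c = 0
  · subst hc0
    exact Or.inl ⟨b, hb, hb0, fun t ht => by rw [hf t ht]; ring⟩
  exfalso
  have hq : b * c⁻¹ ∈ Kset := K_mul hb (K_inv hc)
  refine hf0 _ (K_pow hq 4) (pow_ne_zero _ (mul_ne_zero hb0 (inv_ne_zero hc0))) ?_
  rw [hf _ (K_pow hq 4)]
  have h8 : (b * c⁻¹) ^ 8 = b * c⁻¹ := hq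
  rw [show 0 * (b * c⁻¹) ^ 4 + b * ((b * c⁻¹) ^ 4) ^ 2 + c * ((b * c⁻¹) ^ 4) ^ 4 =
    b * (b * c⁻¹) ^ 8 + c * ((b * c⁻¹) ^ 8) ^ 2 by ring, h8]
  field_simp
  linear_combination b ^ 2 * h2

end normalform

/-! ### Blocks on a line -/

section collinear

variable {g : F9} {𝓑 : Set (Submodule (ZMod 2) F9)}

theorem mem_of_eq {B : Submodule (ZMod 2) F9} {x y : F9} (hx : x ∈ B) (h : y = x) : y ∈ B := h ▸ hx

/-- A block contained in the line `PK + QK` and missing the points `PK` and `QK` is, up to a factor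
from `K^*`, one of `{t P + t ^ 2 Q}` and `{t P + t ^ 4 Q}`. -/
theorem normal_form (h : IsCyclicTwoAnalog g 𝓑) (hSig : SigmaSet ⊆ 𝓑)
    {B : Submodule (ZMod 2) F9} (hB : B ∈ 𝓑 \ SigmaSet) {P Q : F9} (hP : P ≠ 0)
    (hQP : Q / P ∉ Kset) (hsub : ∀ u ∈ B, u ∈ Kspan P Q)
    (hPB : ∀ k ∈ Kset, k * P ∈ B → k = 0) (hQB : ∀ k ∈ Kset, k * Q ∈ B → k = 0) :
    ∃ k ∈ Kset, k ≠ 0 ∧ ((∀ t ∈ Kset, t * P + t ^ 2 * Q ∈ mulS k B) ∨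
      ∀ t ∈ Kset, t * P + t ^ 4 * Q ∈ mulS k B) := by
  classical
  have huniq : ∀ t ∈ Kset, ∀ s ∈ Kset, ∀ s' ∈ Kset, t * P + s * Q ∈ B → t * P + s' * Q ∈ B →
      s = s' := by
    intro t _ s hs s' hs' h1 h2
    have := B.add_mem h1 h2
    rw [show t * P + s * Q + (t * P + s' * Q) = (s + s') * Q + (t * P + t * P) by ring,
      CharTwo.add_self_eq_zero, add_zero] at this
    exact CharTwo.add_eq_zero.mp (hQB _ (K_add hs hs') this)
  -- the projection of `B` to the first coordinate is injective, hence onto `K`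
  have hex : ∀ t ∈ Kset, ∃ s ∈ Kset, t * P + s * Q ∈ B := by
    choose! p hp q hq hpq using hsub
    have himg : p '' (B : Set F9) = Kset := by
      refine Set.eq_of_subset_of_ncard_le ?_ ?_ (Set.toFinite _)
      · rintro _ ⟨u, hu, rfl⟩
        exact hp u hu
      · rw [Set.InjOn.ncard_image, ← Nat.card_coe_set_eq, card_K, ← Nat.card_coe_set_eq]
        · exact (card_block h hB.1).ge
        · intro u hu v hv huv
          have h1 : p u * P + q u * Q ∈ B := hpq u hu ▸ hu
          have h2 : p u * P + q v * Q ∈ B := by rw [huv]; exact hpq v hv ▸ hv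
          rw [hpq u hu, hpq v hv, huniq _ (hp u hu) _ (hq u hu) _ (hq v hv) h1 h2, huv]
    intro t ht
    rw [← himg] at ht
    obtain ⟨u, hu, rfl⟩ := ht
    exact ⟨q u, hq u hu, hpq u hu ▸ hu⟩
  choose! f hfK hfB using hex
  have hform := additive_form (f := f) hfK
    (fun t ht t' ht' => by
      refine huniq _ (K_add ht ht') _ (hfK _ (K_add ht ht')) _ (K_add (hfK t ht) (hfK t' ht'))
        (hfB _ (K_add ht ht')) ?_
      have := B.add_mem (hfB t ht) (hfB t' ht')
      rwa [show t * P + f t * Q + (t' * P + f t' * Q) = (t + t') * P + (f t + f t') * Q by ring]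
        at this)
    (fun t ht h0 hf0 => by
      have := hfB t ht
      rw [hf0, zero_mul, add_zero] at this
      exact h0 (hPB t ht this))
    (fun t ht t' ht' h0 h0' he => by
      have hne : ∀ t ∈ Kset, t ≠ 0 → t * P + f t * Q ≠ 0 := fun t ht h0 h1 =>
        h0 (K_indep hP hQP ht (hfK t ht) h1).1
      have e1 : f t = t * (f t' / t') := by rw [← he]; field_simp
      have e2 : t' * P + f t' * Q = (t' / t) * (t * P + f t * Q) := by
        rw [e1]; field_simp
      have := block_scattered h hSig hB (hfB t ht) (hfB t' ht') (hne t ht h0) (hne t' ht' h0') (by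
        rw [e2, mul_div_cancel_right₀ _ (hne t ht h0), div_eq_mul_inv]
        exact K_mul ht' (K_inv ht))
      obtain ⟨h1, -⟩ := K_indep hP hQP (K_add ht ht') (K_add (hfK t ht) (hfK t' ht')) (by
        rw [← CharTwo.add_eq_zero] at this
        linear_combination this)
      exact CharTwo.add_eq_zero.mp h1)
  rcases hform with ⟨b, hb, hb0, hf⟩ | ⟨c, hc, hc0, hf⟩
  · refine ⟨b, hb, hb0, Or.inl fun t ht => ?_⟩
    have hm := K_mul (K_inv hb) ht
    rw [mem_mulS hb0]
    have := hfB _ hm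
    rw [hf _ hm] at this
    refine mem_of_eq this ?_
    field_simp
  · refine ⟨c ^ 5, K_pow hc 5, pow_ne_zero 5 hc0, Or.inr fun t ht => ?_⟩
    have hm := K_mul (K_inv (K_pow hc 5)) ht
    rw [mem_mulS (pow_ne_zero 5 hc0)]
    have := hfB _ hm
    rw [hf _ hm] at this
    refine mem_of_eq this ?_
    have h7 := K_pow_seven hc hc0
    field_simp
    rw [show c ^ 14 = (c ^ 7) ^ 2 by ring, h7]
    ring

theorem frob_root {α : F9} (hα : α ^ 9 = α ^ 4 + 1) (s : ℕ) :
    (α ^ 2 ^ s) ^ 9 = (α ^ 2 ^ s) ^ 4 + 1 := by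
  have : (α ^ 9) ^ 2 ^ s = (α ^ 4 + 1) ^ 2 ^ s := by rw [hα]
  rw [add_pow_char_pow, one_pow] at this
  rw [← pow_mul, ← pow_mul, mul_comm _ 9, mul_comm _ 4, pow_mul, pow_mul, this]

/-- Reduction of a line whose basis vectors have ratio in `α ^ r K` to the case of `no_two`, by
rescaling the parameter `t` and the block. -/
theorem no_two_pos (h : IsCyclicTwoAnalog g 𝓑) (hSig : SigmaSet ⊆ 𝓑) {α : F9}
    (hα : α ^ 9 = α ^ 4 + 1) {B B' : Submodule (ZMod 2) F9} (hB : B ∈ 𝓑 \ SigmaSet)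
    (hB' : B' ∈ 𝓑 \ SigmaSet) {r : ℕ} (hr : r ∈ [1, 3, 5, 11]) {P Q : F9} (hP : P ≠ 0) (hQ : Q ≠ 0)
    (hPQ : P / Q / α ^ r ∈ Kset) (h2 : ∀ t ∈ Kset, t * P + t ^ 2 * Q ∈ B)
    (h4 : ∀ t ∈ Kset, t * P + t ^ 4 * Q ∈ B') : False := by
  have hr0 : α ^ r ≠ 0 := pow_ne_zero r (alpha_ne_zero hα)
  obtain ⟨κ, hκ⟩ : ∃ κ, κ = P / Q / α ^ r := ⟨_, rfl⟩
  rw [← hκ] at hPQ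
  have hκ0 : κ ≠ 0 := by rw [hκ]; exact div_ne_zero (div_ne_zero hP hQ) hr0
  have hPe : P = κ * α ^ r * Q := by rw [hκ]; field_simp
  have h7 := K_pow_seven hPQ hκ0
  have c1 : (κ ^ 2 * Q)⁻¹ ≠ 0 := inv_ne_zero (mul_ne_zero (pow_ne_zero 2 hκ0) hQ)
  have c2 : κ * Q⁻¹ ≠ 0 := mul_ne_zero hκ0 (inv_ne_zero hQ)
  refine no_two h hSig hα (mulS_mem_diff h c1 hB) (mulS_mem_diff h c2 hB') hr (fun t ht => ?_)
    fun t ht => ?_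
  · refine mem_of_eq (mul_mem_mulS (c := (κ ^ 2 * Q)⁻¹) (h2 (κ * t) (K_mul hPQ ht))) ?_
    rw [hPe]
    field_simp
  · refine mem_of_eq (mul_mem_mulS (c := κ * Q⁻¹)
      (h4 ((κ ^ 2)⁻¹ * t) (K_mul (K_inv (K_pow hPQ 2)) ht))) ?_
    rw [hPe]
    field_simp
    rw [h7]
    ring

/-- `2` and `-1` generate a subgroup of index four in `(ℤ/73)^*`, with coset representatives
`1, 3, 5, 11`. -/
theorem coset_reps : ∀ i < 73, i ≠ 0 → ∃ s < 9, ∃ r ∈ [1, 3, 5, 11],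
    i % 73 = (2 ^ s * r) % 73 ∨ (i + 2 ^ s * r) % 73 = 0 := by
  decide +kernel

/-- The two normal forms of blocks on a line never occur together. Replacing `α` by a conjugate
`α ^ 2 ^ s`, and exchanging the roles of `P` and `Q` where the sign requires it, reduces the claim
to the four cases of `no_two`. -/
theorem no_two_gen (h : IsCyclicTwoAnalog g 𝓑) (hSig : SigmaSet ⊆ 𝓑)
    {B B' : Submodule (ZMod 2) F9} (hB : B ∈ 𝓑 \ SigmaSet)
    (hB' : B' ∈ 𝓑 \ SigmaSet) {P Q : F9} (hP : P ≠ 0) (hQ : Q ≠ 0)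
    (hPQ : P / Q ∉ Kset) (h2 : ∀ t ∈ Kset, t * P + t ^ 2 * Q ∈ B)
    (h4 : ∀ t ∈ Kset, t * P + t ^ 4 * Q ∈ B') : False := by
  obtain ⟨α, hα⟩ := exists_root
  have hp : ∀ n : ℕ, α ^ n ≠ 0 := fun n => pow_ne_zero n (alpha_ne_zero hα)
  obtain ⟨i, hi, he⟩ := alpha_surj hα (div_ne_zero hP hQ)
  rw [← he, K_iff hα] at hPQ
  obtain ⟨s, -, r, hr, hc⟩ := coset_reps (i % 73) (Nat.mod_lt _ (by norm_num))
    (fun h0 => hPQ (Nat.dvd_of_mod_eq_zero h0))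
  have hdiv : ∀ a b : ℕ, a % 73 = b % 73 → α ^ a / α ^ b ∈ Kset := by
    intro a b hab
    rw [← pow_mod hα b, ← pow_sb hα (Nat.mod_lt b (by norm_num)), K_iff hα, sb]
    show 73 ∣ (a + 511 - b % 511) % 511
    have := Nat.mod_lt b (show 0 < 511 by norm_num)
    omega
  rcases hc with hc | hc
  · refine no_two_pos h hSig (frob_root hα s) hB hB' hr hP hQ ?_ h2 h4
    rw [← he, ← pow_mul]
    exact hdiv _ _ (by omega)
  · -- the substitutions `t ↦ t ^ 4` and `t ↦ t ^ 2` exchange the two types along with `P` and `Q`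
    refine no_two_pos h hSig (frob_root hα s) hB' hB hr hQ hP ?_ (fun t ht => ?_) fun t ht => ?_
    · rw [← inv_div P Q, ← he, ← pow_mul, ← one_div, div_div, ← pow_add]
      simpa using hdiv 0 (i + 2 ^ s * r) (by omega)
    · have := h4 _ (K_pow ht 2)
      rwa [← pow_mul, show t ^ (2 * 4) = t from ht, add_comm] at this
    · have := h2 _ (K_pow ht 4)
      rwa [← pow_mul, show t ^ (4 * 2) = t from ht, add_comm] at this

end collinear

/-! ### Blocks with the same point set -/

section key

variable {g : F9} {𝓑 : Set (Submodule (ZMod 2) F9)}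

theorem exists_scale {B B' : Submodule (ZMod 2) F9} (he : piB B = piB B') {b : F9} (hb : b ∈ B)
    (hb0 : b ≠ 0) : ∃ k ∈ Kset, k ≠ 0 ∧ k * b ∈ B' := by
  have hm : pt b ∈ piB B' := he ▸ ⟨b, hb, hb0, rfl⟩
  obtain ⟨x, hx, hx0, hpt⟩ := hm
  refine ⟨x / b, (pt_eq_iff hb0 hx0).mp hpt, div_ne_zero hx0 hb0, ?_⟩
  rw [div_mul_cancel₀ _ hb0]
  exact hx

theorem exists_basis (h : IsCyclicTwoAnalog g 𝓑) {B : Submodule (ZMod 2) F9} (hB : B ∈ 𝓑) :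
    ∃ x ∈ B, ∃ y ∈ B, ∃ z ∈ B, x ≠ 0 ∧ y ≠ 0 ∧ x ≠ y ∧ z ≠ 0 ∧ z ≠ x ∧ z ≠ y ∧ z ≠ x + y := by
  classical
  obtain ⟨x, hx, hx'⟩ := exists_notin h hB {0} (by simp)
  obtain ⟨y, hy, hy'⟩ := exists_notin h hB {0, x} (lt_of_le_of_lt Finset.card_le_two (by norm_num))
  obtain ⟨z, hz, hz'⟩ := exists_notin h hB {0, x, y, x + y}
    (lt_of_le_of_lt Finset.card_le_four (by norm_num))
  simp only [Finset.mem_insert, Finset.mem_singleton, not_or] at hx' hy' hz'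
  exact ⟨x, hx, y, hy, z, hz, hx', hy'.1, Ne.symm hy'.2, hz'.1, hz'.2.1, hz'.2.2.1, hz'.2.2.2⟩

/-- Two distinct nonzero vectors of `B` with the same scaling factor into `B'` force `B' = k B`. -/
theorem eq_mulS_of_two (h : IsCyclicTwoAnalog g 𝓑) {B B' : Submodule (ZMod 2) F9} (hB : B ∈ 𝓑)
    (hB' : B' ∈ 𝓑) {k x y : F9} (hk : k ≠ 0) (hx : x ∈ B) (hy : y ∈ B) (hx0 : x ≠ 0) (hy0 : y ≠ 0)
    (hxy : x ≠ y) (h1 : k * x ∈ B') (h2 : k * y ∈ B') : B' = mulS k B :=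
  block_unique h hB' (mulS_mem h hk hB) (mul_ne_zero hk hx0) (mul_ne_zero hk hy0)
    (fun e => hxy (mul_left_cancel₀ hk e)) h1 h2 (mul_mem_mulS hx) (mul_mem_mulS hy)

/-- The case of `key` in which `B` spans `F` over `K`: if `l x` and `m y` lie in `B'`, then some
`K^*`-multiple of `l x + m y` lies in `B`; it can only be `x + y`, so `l = m`. -/
theorem key_plane (h : IsCyclicTwoAnalog g 𝓑) (hSig : SigmaSet ⊆ 𝓑)
    {B B' : Submodule (ZMod 2) F9} (hB : B ∈ 𝓑 \ SigmaSet) (hB' : B' ∈ 𝓑 \ SigmaSet)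
    (he : piB B = piB B') {x y z : F9} (hx : x ∈ B) (hy : y ∈ B) (hz : z ∈ B) (hx0 : x ≠ 0)
    (hy0 : y ≠ 0) (hxy : x ≠ y) (hz0 : z ≠ 0) (hzx : z ≠ x) (hzy : z ≠ y) (hzxy : z ≠ x + y)
    (hspan : z ∉ Kspan x y) : ∃ k ∈ Kset, k ≠ 0 ∧ B' = mulS k B := by
  have hyx : y / x ∉ Kset := fun hK => hxy (block_scattered h hSig hB hx hy hx0 hy0 hK)
  obtain ⟨l, hl, hl0, hlx⟩ := exists_scale he hx hx0
  obtain ⟨m, hm, hm0, hmy⟩ := exists_scale he hy hy0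
  have hsum : l * x + m * y ≠ 0 := fun hc => hl0 (K_indep hx0 hyx hl hm hc).1
  obtain ⟨n', hn', hn0', hw⟩ := exists_scale he.symm (B'.add_mem hlx hmy) hsum
  have h2 : (2 : F9) = 0 := CharTwo.two_eq_zero
  have hbad : ∀ a ∈ Kset, ∀ b ∈ Kset, n' * (l * x + m * y) = z + (a * x + b * y) → False := by
    intro a ha b hb e
    refine hspan ⟨n' * l + a, K_add (K_mul hn' hl) ha, n' * m + b, K_add (K_mul hn' hm) hb, ?_⟩
    linear_combination -e - h2 * (a * x + b * y)
  have hcoef : ∀ a ∈ Kset, ∀ b ∈ Kset, n' * (l * x + m * y) = a * x + b * y →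
      n' * l = a ∧ n' * m = b := by
    intro a ha b hb e
    have := K_indep hx0 hyx (K_add (K_mul hn' hl) ha) (K_add (K_mul hn' hm) hb)
      (by linear_combination e + h2 * (a * x + b * y))
    rwa [CharTwo.add_eq_zero, CharTwo.add_eq_zero] at this
  rcases block_elems h hB.1 hx hy hz hx0 hy0 hxy hz0 hzx hzy hzxy hw with
    e | e | e | e | e | e | e | e
  · exact absurd e (mul_ne_zero hn0' hsum)
  · exact absurd (hcoef 1 K_one 0 K_zero (by rw [e]; ring)).2 (mul_ne_zero hn0' hm0)
  · exact absurd (hcoef 0 K_zero 1 K_one (by rw [e]; ring)).1 (mul_ne_zero hn0' hl0)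
  · obtain ⟨e1, e2⟩ := hcoef 1 K_one 1 K_one (by rw [e]; ring)
    have hlm : m = l := mul_left_cancel₀ hn0' (e2.trans e1.symm)
    rw [hlm] at hmy
    exact ⟨l, hl, hl0, eq_mulS_of_two h hB.1 hB'.1 hl0 hx hy hx0 hy0 hxy hlx hmy⟩
  · exact (hbad 0 K_zero 0 K_zero (by rw [e]; ring)).elim
  · exact (hbad 1 K_one 0 K_zero (by rw [e]; ring)).elim
  · exact (hbad 0 K_zero 1 K_one (by rw [e]; ring)).elim
  · exact (hbad 1 K_one 1 K_one (by rw [e]; ring)).elim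

/-- A block inside the line `L = xK + yK` covers at most seven of its nine points, so two vectors of
`L` on the remaining points can serve as a new `K`-basis of `L`. -/
theorem exists_missed (h : IsCyclicTwoAnalog g 𝓑) {B : Submodule (ZMod 2) F9} (hB : B ∈ 𝓑)
    {x y : F9} (hx0 : x ≠ 0) (hyx : y / x ∉ Kset) :
    ∃ P Q, P ≠ 0 ∧ Q ≠ 0 ∧ Q / P ∉ Kset ∧ Kspan P Q = Kspan x y ∧
      (∀ k ∈ Kset, k * P ∈ B → k = 0) ∧ ∀ k ∈ Kset, k * Q ∈ B → k = 0 := by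
  classical
  let H : Set F9 := (fun p : F9 × F9 => p.1 * p.2) '' ((Kset \ {0}) ×ˢ ((B : Set F9) \ {0}))
  have hK7 : (Kset \ {0}).ncard = 7 := by
    rw [Set.ncard_sdiff_singleton_of_mem K_zero, ← Nat.card_coe_set_eq, card_K]
  have hB7 : ((B : Set F9) \ {0}).ncard = 7 := by
    rw [Set.ncard_sdiff_singleton_of_mem B.zero_mem, ← Nat.card_coe_set_eq]
    have : Nat.card (B : Set F9) = 8 := card_block h hB
    rw [this]
  have hH : H.ncard ≤ 49 := by
    refine (Set.ncard_image_le (Set.toFinite _)).trans ?_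
    rw [Set.ncard_prod, hK7, hB7]
  have hmiss : ∀ P, P ≠ 0 → P ∉ H → ∀ k ∈ Kset, k * P ∈ B → k = 0 := by
    intro P hP hPH k hk hkP
    by_contra hk0
    refine hPH ⟨(k⁻¹, k * P), ⟨⟨K_inv hk, inv_ne_zero hk0⟩, hkP, mul_ne_zero hk0 hP⟩, ?_⟩
    simp [hk0]
  have hL := card_Kspan hx0 hyx
  obtain ⟨P, hPL, hP⟩ : ∃ P ∈ Kspan x y, P ∉ H ∪ {0} := by
    refine Set.exists_mem_notMem_of_ncard_lt_ncard ?_ (Set.toFinite _)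
    have := Set.ncard_union_le H {0}
    rw [Set.ncard_singleton] at this
    omega
  simp only [Set.mem_union, Set.mem_singleton_iff, not_or] at hP
  obtain ⟨Q, hQL, hQ⟩ : ∃ Q ∈ Kspan x y, Q ∉ H ∪ (fun k => P * k) '' Kset := by
    refine Set.exists_mem_notMem_of_ncard_lt_ncard ?_ (Set.toFinite _)
    have h1 := Set.ncard_union_le H ((fun k => P * k) '' Kset)
    have h2 : ((fun k => P * k) '' Kset).ncard ≤ Kset.ncard := Set.ncard_image_le (Set.toFinite _)
    rw [← Nat.card_coe_set_eq Kset, card_K] at h2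
    omega
  simp only [Set.mem_union, not_or] at hQ
  have hQ0 : Q ≠ 0 := fun e => hQ.2 ⟨0, K_zero, by simp [e]⟩
  have hQP : Q / P ∉ Kset := fun hk => hQ.2 ⟨Q / P, hk, by simp only; field_simp [hP.2]⟩
  refine ⟨P, Q, hP.2, hQ0, hQP, ?_, hmiss P hP.2 hP.1, hmiss Q hQ0 hQ.1⟩
  refine Set.eq_of_subset_of_ncard_le ?_ (by rw [hL, card_Kspan hP.2 hQP]) (Set.toFinite _)
  rintro u ⟨a, ha, b, hb, rfl⟩
  exact Kspan_add (Kspan_mul ha hPL) (Kspan_mul hb hQL)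

/-- Two blocks sharing two distinct nonzero vectors after scaling are proportional. -/
theorem proportional (h : IsCyclicTwoAnalog g 𝓑) {B B' : Submodule (ZMod 2) F9} (hB : B ∈ 𝓑)
    (hB' : B' ∈ 𝓑) {k k' u v : F9} (hk : k ∈ Kset) (hk0 : k ≠ 0) (hk' : k' ∈ Kset) (hk0' : k' ≠ 0)
    (hu : u ≠ 0) (hv : v ≠ 0) (huv : u ≠ v) (h1 : u ∈ mulS k B) (h2 : v ∈ mulS k B)
    (h3 : u ∈ mulS k' B') (h4 : v ∈ mulS k' B') : ∃ c ∈ Kset, c ≠ 0 ∧ B' = mulS c B := by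
  have e := block_unique h (mulS_mem h hk0' hB') (mulS_mem h hk0 hB) hu hv huv h3 h4 h1 h2
  refine ⟨k'⁻¹ * k, K_mul (K_inv hk') hk, mul_ne_zero (inv_ne_zero hk0') hk0, ?_⟩
  rw [mulS_inv hk0' e, mulS_mulS]

/-- Blocks with the same point set in `PG(2,8)` differ by a factor from `K^*`. If `B` lies on a line,
both blocks are put in normal form with respect to two points of the line they miss. -/
theorem key (h : IsCyclicTwoAnalog g 𝓑) (hSig : SigmaSet ⊆ 𝓑)
    {B B' : Submodule (ZMod 2) F9} (hB : B ∈ 𝓑 \ SigmaSet) (hB' : B' ∈ 𝓑 \ SigmaSet)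
    (he : piB B = piB B') : ∃ k ∈ Kset, k ≠ 0 ∧ B' = mulS k B := by
  obtain ⟨x, hx, y, hy, z, hz, hx0, hy0, hxy, hz0, hzx, hzy, hzxy⟩ := exists_basis h hB.1
  by_cases hspan : z ∈ Kspan x y
  swap
  · exact key_plane h hSig hB hB' he hx hy hz hx0 hy0 hxy hz0 hzx hzy hzxy hspan
  have hyx : y / x ∉ Kset := fun hK => hxy (block_scattered h hSig hB hx hy hx0 hy0 hK)
  have hsub : ∀ u ∈ B, u ∈ Kspan x y := by
    intro u hu
    have lx := left_mem_Kspan x y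
    have ly := right_mem_Kspan x y
    rcases block_elems h hB.1 hx hy hz hx0 hy0 hxy hz0 hzx hzy hzxy hu with
      e | e | e | e | e | e | e | e <;> rw [e]
    · exact ⟨0, K_zero, 0, K_zero, by ring⟩
    · exact lx
    · exact ly
    · exact Kspan_add lx ly
    · exact hspan
    · exact Kspan_add lx hspan
    · exact Kspan_add ly hspan
    · exact Kspan_add (Kspan_add lx ly) hspan
  obtain ⟨P, Q, hP, hQ, hQP, hPQ, hPB, hQB⟩ := exists_missed h hB.1 hx0 hyx
  rw [← hPQ] at hsub
  have hsub' : ∀ u ∈ B', u ∈ Kspan P Q := by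
    intro u hu
    by_cases hu0 : u = 0
    · exact ⟨0, K_zero, 0, K_zero, by rw [hu0]; ring⟩
    obtain ⟨k, hk, hk0, hku⟩ := exists_scale he.symm hu hu0
    have := Kspan_mul (K_inv hk) (hsub _ hku)
    rwa [inv_mul_cancel_left₀ hk0] at this
  have hmiss : ∀ R, R ≠ 0 → (∀ k ∈ Kset, k * R ∈ B → k = 0) → ∀ k ∈ Kset, k * R ∈ B' → k = 0 := by
    intro R hR hRB k hk hkR
    by_contra hk0
    obtain ⟨c, hc, hc0, hcR⟩ := exists_scale he.symm hkR (mul_ne_zero hk0 hR)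
    rw [← mul_assoc] at hcR
    exact mul_ne_zero hc0 hk0 (hRB _ (K_mul hc hk) hcR)
  obtain ⟨k, hk, hk0, hn⟩ := normal_form h hSig hB hP hQP hsub hPB hQB
  obtain ⟨k', hk', hk0', hn'⟩ := normal_form h hSig hB' hP hQP hsub' (hmiss P hP hPB)
    (hmiss Q hQ hQB)
  have hb := mulS_mem_diff h hk0 hB
  have hb' := mulS_mem_diff h hk0' hB'
  obtain ⟨θ, hθ, hθ3⟩ := exists_theta
  have hθ0 : θ ≠ 0 := by
    rintro rfl
    simp at hθ3
  have hθ1 : θ ≠ 1 := by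
    rintro rfl
    simp [CharTwo.add_self_eq_zero] at hθ3
  -- the vectors with parameters `1` and `θ` of either normal form are nonzero and distinct
  have hne : ∀ i : ℕ, (1 : F9) * P + 1 ^ i * Q ≠ 0 ∧ θ * P + θ ^ i * Q ≠ 0 ∧
      (1 : F9) * P + 1 ^ i * Q ≠ θ * P + θ ^ i * Q := by
    intro i
    refine ⟨fun e => one_ne_zero (K_indep hP hQP K_one (K_pow K_one i) e).1,
      fun e => hθ0 (K_indep hP hQP hθ (K_pow hθ i) e).1, fun e => hθ1 ?_⟩
    have := (K_indep hP hQP (K_add K_one hθ) (K_add (K_pow K_one i) (K_pow hθ i)) (by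
      rw [← CharTwo.add_eq_zero] at e
      linear_combination e)).1
    rw [CharTwo.add_eq_zero] at this
    exact this.symm
  rcases hn with hn | hn <;> rcases hn' with hn' | hn'
  · exact proportional h hB.1 hB'.1 hk hk0 hk' hk0' (hne 2).1 (hne 2).2.1 (hne 2).2.2
      (hn 1 K_one) (hn θ hθ) (hn' 1 K_one) (hn' θ hθ)
  · exact (no_two_gen h hSig hb hb' hP hQ (not_K_symm hQP) hn hn').elim
  · exact (no_two_gen h hSig hb' hb hP hQ (not_K_symm hQP) hn' hn).elim
  · exact proportional h hB.1 hB'.1 hk hk0 hk' hk0' (hne 4).1 (hne 4).2.1 (hne 4).2.2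
      (hn 1 K_one) (hn θ hθ) (hn' 1 K_one) (hn' θ hθ)

end key

/-! ### Counting -/

section counting

variable {g : F9} {𝓑 : Set (Submodule (ZMod 2) F9)}

theorem ncard_eq_mul_of_fiber {ι κ : Type*} [Finite ι] (f : ι → κ) (S : Set ι) (n : ℕ)
    (hf : ∀ a ∈ S, {b ∈ S | f b = f a}.ncard = n) : S.ncard = n * (f '' S).ncard := by
  classical
  have : Fintype ι := Fintype.ofFinite ι
  let s : Finset ι := S.toFinite.toFinset
  have hs : (s : Set ι) = S := by simp [s]
  have hsum : ∀ c ∈ s.image f, {b ∈ s | f b = c}.card = n := by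
    intro c hc
    obtain ⟨a, ha, rfl⟩ := Finset.mem_image.mp hc
    rw [← hf a (by rw [← hs]; exact ha), ← Set.ncard_coe_finset]
    congr 1
    ext b
    simp [s]
  rw [← hs, ← Finset.coe_image, Set.ncard_coe_finset, Set.ncard_coe_finset,
    Finset.card_eq_sum_card_image f s, Finset.sum_congr rfl hsum, Finset.sum_const, smul_eq_mul,
    mul_comm]

theorem generator_ne_zero (h : IsCyclicTwoAnalog g 𝓑) : g ≠ 0 := by
  rintro rfl
  obtain ⟨θ, -, hθ3⟩ := exists_theta
  have hθ0 : θ ≠ 0 := by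
    rintro rfl
    simp at hθ3
  obtain ⟨m, hm⟩ := h.1 θ hθ0
  rcases Nat.eq_zero_or_pos m with rfl | hpos
  · rw [pow_zero] at hm
    simp [← hm, CharTwo.add_self_eq_zero] at hθ3
  · exact hθ0 (by rw [← hm, zero_pow hpos.ne'])

theorem wact_piB (c : F9) (hc : c ≠ 0) (B : Submodule (ZMod 2) F9) :
    wact c (piB B) = piB (mulS c B) := by
  have hw : ∀ x, wmap c (pt x) = pt (c * x) := by
    intro x
    ext y
    constructor
    · rintro ⟨-, ⟨k, hk, rfl⟩, rfl⟩
      exact ⟨k, hk, by simp only; ring⟩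
    · rintro ⟨k, hk, rfl⟩
      exact ⟨x * k, ⟨k, hk, rfl⟩, by simp only; ring⟩
  ext P
  constructor
  · rintro ⟨-, ⟨x, hx, hx0, rfl⟩, rfl⟩
    exact ⟨c * x, mul_mem_mulS hx, mul_ne_zero hc hx0, hw x⟩
  · rintro ⟨-, ⟨x, hx, rfl⟩, hx0, rfl⟩
    exact ⟨pt x, ⟨x, hx, fun e => hx0 (by simp [e]), rfl⟩, hw x⟩

/-- Multiplication by `c ∈ F^*` and the powers of `g` give the same `W`-orbits. -/
theorem mem_Worbit (h : IsCyclicTwoAnalog g 𝓑) {B : Submodule (ZMod 2) F9} {ρ : Set (Set F9)} :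
    ρ ∈ Worbit g (piB B) ↔ ∃ c : F9, c ≠ 0 ∧ piB (mulS c B) = ρ := by
  have hg := generator_ne_zero h
  have hit : ∀ m : ℕ, (wact g)^[m] (piB B) = piB (mulS (g ^ m) B) := by
    intro m
    induction m with
    | zero => simp [mulS_one]
    | succ n ih => rw [Function.iterate_succ_apply', ih, wact_piB g hg, mulS_mulS, pow_succ']
  constructor
  · rintro ⟨m, rfl⟩
    exact ⟨g ^ m, pow_ne_zero m hg, (hit m).symm⟩
  · rintro ⟨c, hc, rfl⟩
    obtain ⟨m, rfl⟩ := h.1 c hc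
    exact ⟨m, hit m⟩

theorem piB_mulS_K {k : F9} (hk : k ∈ Kset) (hk0 : k ≠ 0) (B : Submodule (ZMod 2) F9) :
    piB (mulS k B) = piB B := by
  have hp : ∀ x, x ≠ 0 → pt x = pt (k * x) := fun x hx =>
    (pt_eq_iff hx (mul_ne_zero hk0 hx)).mpr (by rwa [mul_div_cancel_right₀ _ hx])
  ext P
  constructor
  · rintro ⟨-, ⟨x, hx, rfl⟩, hx0, rfl⟩
    have hx0' : x ≠ 0 := fun e => hx0 (by simp [e])
    exact ⟨x, hx, hx0', (hp x hx0').symm⟩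
  · rintro ⟨x, hx, hx0, rfl⟩
    exact ⟨k * x, mul_mem_mulS hx, mul_ne_zero hk0 hx0, hp x hx0⟩

theorem mulS_injOn (h : IsCyclicTwoAnalog g 𝓑) (hSig : SigmaSet ⊆ 𝓑)
    {B : Submodule (ZMod 2) F9} (hB : B ∈ 𝓑 \ SigmaSet) :
    Set.InjOn (fun c : F9 => mulS c B) {0}ᶜ := by
  intro c hc d hd he
  have hd0 : d ≠ 0 := hd
  have hc0 : c ≠ 0 := hc
  have e : mulS (d⁻¹ * c) B = B := by
    rw [← mulS_mulS]
    exact (mulS_inv hd0 he.symm).symm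
  have := mulS_free h hSig hB (mul_ne_zero (inv_ne_zero hd0) hc0) e
  rw [inv_mul_eq_one₀ hd0] at this
  exact this.symm

theorem ncard_nonzero : ({0}ᶜ : Set F9).ncard = 511 := by
  rw [Set.ncard_compl, card_F9, Set.ncard_singleton]

/-- Counting pairs `(x, y)` of vectors independent over `K`, written as `y = x t` with `t ∉ K`,
according to the unique block containing both. -/
theorem ncard_blocks (h : IsCyclicTwoAnalog g 𝓑) (hSig : SigmaSet ⊆ 𝓑) :
    (𝓑 \ SigmaSet).ncard = 6132 := by
  classical
  let T : Set (F9 × F9) := ({0}ᶜ : Set F9) ×ˢ Ksetᶜ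
  have hT : T.ncard = 511 * 504 := by
    rw [Set.ncard_prod, ncard_nonzero, Set.ncard_compl, card_F9, ← Nat.card_coe_set_eq, card_K]
  have hT0 : ∀ p ∈ T, p.1 ≠ 0 ∧ p.1 * p.2 ≠ 0 ∧ p.1 ≠ p.1 * p.2 := by
    rintro ⟨x, t⟩ ⟨hx, ht⟩
    have hx : x ≠ 0 := hx
    have ht : t ∉ Kset := ht
    refine ⟨hx, mul_ne_zero hx fun (e : t = 0) => ht (e ▸ K_zero), fun e => ht ?_⟩
    have : t = 1 := mul_left_cancel₀ hx (by rw [mul_one]; exact e.symm)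
    exact this ▸ K_one
  have hex : ∀ p : F9 × F9, ∃ B, p ∈ T → B ∈ 𝓑 ∧ p.1 ∈ B ∧ p.1 * p.2 ∈ B := by
    intro p
    by_cases hp : p ∈ T
    · obtain ⟨h1, h2, h3⟩ := hT0 p hp
      obtain ⟨B, hB, h4, h5⟩ := block_exists h h1 h2 h3
      exact ⟨B, fun _ => ⟨hB, h4, h5⟩⟩
    · exact ⟨⊥, fun hp' => absurd hp' hp⟩
  choose f hf using hex
  have huniq : ∀ p ∈ T, ∀ B ∈ 𝓑, p.1 ∈ B → p.1 * p.2 ∈ B → f p = B := by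
    intro p hp B hB h1 h2
    obtain ⟨a1, a2, a3⟩ := hT0 p hp
    exact block_unique h (hf p hp).1 hB a1 a2 a3 (hf p hp).2.1 (hf p hp).2.2 h1 h2
  have hmemT : ∀ B ∈ 𝓑 \ SigmaSet, ∀ x ∈ B, ∀ y ∈ B, x ≠ 0 → y ≠ 0 → x ≠ y →
      ((x, y / x) : F9 × F9) ∈ T := fun B hB x hx y hy hx0 hy0 hxy =>
    ⟨hx0, fun hK => hxy (block_scattered h hSig hB hx hy hx0 hy0 hK)⟩
  have hfS : ∀ p ∈ T, f p ∈ 𝓑 \ SigmaSet := by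
    intro p hp
    obtain ⟨h1, h2, h3⟩ := hf p hp
    refine ⟨h1, ?_⟩
    rintro ⟨z, hz, he⟩
    have m1 : p.1 / z ∈ Kset := (mem_pt hz).mp (he ▸ h2)
    have m2 : p.1 * p.2 / z ∈ Kset := (mem_pt hz).mp (he ▸ h3)
    refine hp.2 ?_
    have : p.2 = (p.1 * p.2 / z) * (p.1 / z)⁻¹ := by
      field_simp [(hT0 p hp).1, hz]
    rw [this]
    exact K_mul m2 (K_inv m1)
  have himg : f '' T = 𝓑 \ SigmaSet := by
    ext B
    constructor
    · rintro ⟨p, hp, rfl⟩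
      exact hfS p hp
    · intro hB
      obtain ⟨x, hx, y, hy, -, -, hx0, hy0, hxy, -⟩ := exists_basis h hB.1
      have hp := hmemT B hB x hx y hy hx0 hy0 hxy
      refine ⟨_, hp, huniq _ hp B hB.1 hx ?_⟩
      rw [mul_div_cancel₀ _ hx0]
      exact hy
  have hfib : ∀ p ∈ T, {q ∈ T | f q = f p}.ncard = 42 := by
    intro p hp
    have hB := hfS p hp
    obtain ⟨B, hBe⟩ : ∃ B, B = f p := ⟨_, rfl⟩
    rw [← hBe] at hB ⊢
    have hfin : Fintype F9 := Fintype.ofFinite _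
    let s : Finset F9 := Finset.univ.filter fun x => x ∈ B ∧ x ≠ 0
    have hs : s.card = 7 := by
      have e : (s : Set F9) = (B : Set F9) \ {0} := by
        ext x
        simp [s]
      rw [← Set.ncard_coe_finset, e, Set.ncard_sdiff_singleton_of_mem B.zero_mem,
        ← Nat.card_coe_set_eq]
      have : Nat.card (B : Set F9) = 8 := card_block h hB.1
      rw [this]
    have he : {q ∈ T | f q = B} = (fun q : F9 × F9 => (q.1, q.2 / q.1)) '' (s.offDiag : Set _) := by
      ext ⟨x, t⟩
      constructor
      · rintro ⟨hq, hqB⟩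
        obtain ⟨a1, a2, a3⟩ := hT0 _ hq
        obtain ⟨-, b2, b3⟩ := hf _ hq
        rw [hqB] at b2 b3
        refine ⟨(x, x * t), ?_, ?_⟩
        · simp only [Finset.mem_coe, Finset.mem_offDiag, s, Finset.mem_filter, Finset.mem_univ,
            true_and]
          exact ⟨⟨b2, a1⟩, ⟨b3, a2⟩, a3⟩
        · simp only [mul_div_cancel_left₀ t a1]
      · rintro ⟨⟨a, b⟩, hab, heq⟩
        simp only [Finset.mem_coe, Finset.mem_offDiag, s, Finset.mem_filter, Finset.mem_univ,
            true_and] at hab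
        obtain ⟨⟨b2, a1⟩, ⟨b3, a2⟩, a3⟩ := hab
        rw [← heq]
        have hp := hmemT B hB a b2 b b3 a1 a2 a3
        refine ⟨hp, huniq _ hp B hB.1 b2 ?_⟩
        rw [mul_div_cancel₀ _ a1]
        exact b3
    rw [he, Set.InjOn.ncard_image, Set.ncard_coe_finset, Finset.offDiag_card, hs]
    rintro ⟨a, b⟩ hab ⟨c, d⟩ - heq
    simp only [Finset.mem_coe, Finset.mem_offDiag, s, Finset.mem_filter, Finset.mem_univ,
            true_and] at hab
    simp only [Prod.mk.injEq] at heq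
    obtain ⟨rfl, heq⟩ := heq
    rw [div_left_inj' hab.1.2] at heq
    rw [heq]
  have := ncard_eq_mul_of_fiber f T 42 hfib
  rw [himg, hT] at this
  omega

/-- The fibres of `B ↦ π_B` are the regular orbits of `K^*`. -/
theorem ncard_Bprime (h : IsCyclicTwoAnalog g 𝓑) (hSig : SigmaSet ⊆ 𝓑) :
    (Bprime 𝓑).ncard = 876 := by
  have himg : Bprime 𝓑 = piB '' (𝓑 \ SigmaSet) := by
    ext π
    exact ⟨fun ⟨B, hB, e⟩ => ⟨B, hB, e.symm⟩, fun ⟨B, hB, e⟩ => ⟨B, hB, e.symm⟩⟩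
  have := ncard_eq_mul_of_fiber piB (𝓑 \ SigmaSet) 7 (fun B hB => by
    have he : {B' ∈ 𝓑 \ SigmaSet | piB B' = piB B} = (fun c => mulS c B) '' (Kset \ {0}) := by
      ext B'
      constructor
      · rintro ⟨hB', e⟩
        obtain ⟨k, hk, hk0, rfl⟩ := key h hSig hB hB' e.symm
        exact ⟨k, ⟨hk, hk0⟩, rfl⟩
      · rintro ⟨k, ⟨hk, hk0⟩, rfl⟩
        exact ⟨mulS_mem_diff h hk0 hB, piB_mulS_K hk hk0 B⟩
    rw [he, Set.InjOn.ncard_image ((mulS_injOn h hSig hB).mono fun c hc => hc.2),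
      Set.ncard_sdiff_singleton_of_mem K_zero, ← Nat.card_coe_set_eq, card_K])
  rw [← himg, ncard_blocks h hSig] at this
  omega

/-- The fibres of the map from `B` to the `W`-orbit of `π_B` are the regular orbits of `F^*`. -/
theorem ncard_orbits (h : IsCyclicTwoAnalog g 𝓑) (hSig : SigmaSet ⊆ 𝓑) :
    {O : Set (Set (Set F9)) | ∃ π ∈ Bprime 𝓑, O = Worbit g π}.ncard = 12 := by
  have himg : {O : Set (Set (Set F9)) | ∃ π ∈ Bprime 𝓑, O = Worbit g π} =
      (fun B => Worbit g (piB B)) '' (𝓑 \ SigmaSet) := by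
    ext O
    constructor
    · rintro ⟨-, ⟨B, hB, rfl⟩, rfl⟩
      exact ⟨B, hB, rfl⟩
    · rintro ⟨B, hB, rfl⟩
      exact ⟨_, ⟨B, hB, rfl⟩, rfl⟩
  have := ncard_eq_mul_of_fiber (fun B => Worbit g (piB B)) (𝓑 \ SigmaSet) 511 (fun B hB => by
    have he : {B' ∈ 𝓑 \ SigmaSet | Worbit g (piB B') = Worbit g (piB B)} =
        (fun c => mulS c B) '' {0}ᶜ := by
      ext B'
      constructor
      · rintro ⟨hB', e⟩
        have hm : piB B' ∈ Worbit g (piB B) := e ▸ ⟨0, rfl⟩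
        obtain ⟨c, hc, hce⟩ := (mem_Worbit h).mp hm
        obtain ⟨k, hk, hk0, rfl⟩ := key h hSig (mulS_mem_diff h hc hB) hB' hce
        exact ⟨k * c, mul_ne_zero hk0 hc, (mulS_mulS k c B).symm⟩
      · rintro ⟨c, hc, rfl⟩
        have hc0 : c ≠ 0 := hc
        refine ⟨mulS_mem_diff h hc0 hB, ?_⟩
        ext ρ
        simp only [mem_Worbit h, mulS_mulS]
        constructor
        · rintro ⟨d, hd, e⟩
          exact ⟨d * c, mul_ne_zero hd hc0, e⟩
        · rintro ⟨d, hd, e⟩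
          exact ⟨d * c⁻¹, mul_ne_zero hd (inv_ne_zero hc0), by rwa [inv_mul_cancel_right₀ hc0]⟩
    rw [he, (mulS_injOn h hSig hB).ncard_image, ncard_nonzero])
  rw [← himg, ncard_blocks h hSig] at this
  omega

theorem sUnion_orbits (h : IsCyclicTwoAnalog g 𝓑) :
    ⋃₀ {O : Set (Set (Set F9)) | ∃ π ∈ Bprime 𝓑, O = Worbit g π} = Bprime 𝓑 := by
  ext ρ
  constructor
  · rintro ⟨-, ⟨-, ⟨B, hB, rfl⟩, rfl⟩, hρ⟩
    obtain ⟨c, hc, rfl⟩ := (mem_Worbit h).mp hρ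
    exact ⟨mulS c B, mulS_mem_diff h hc hB, rfl⟩
  · intro hρ
    exact ⟨Worbit g ρ, ⟨ρ, hρ, rfl⟩, 0, rfl⟩

end counting

end

end Singer

/-- The block collection `𝓑'` is the union of exactly 12 orbits under the action of
`W = ⟨w⟩`; in particular `|𝓑'| = 876 = 12 · 73`. -/
theorem stmt16 (g : F9) (𝓑 : Set (Submodule (ZMod 2) F9))
    (h𝓑 : IsCyclicTwoAnalog g 𝓑) (hSig : SigmaSet ⊆ 𝓑) :
    {O : Set (Set (Set F9)) | ∃ π ∈ Bprime 𝓑, O = Worbit g π}.ncard = 12 ∧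
    ⋃₀ {O : Set (Set (Set F9)) | ∃ π ∈ Bprime 𝓑, O = Worbit g π} = Bprime 𝓑 ∧
    (Bprime 𝓑).ncard = 876 := by
  exact ⟨Singer.ncard_orbits h𝓑 hSig, Singer.sUnion_orbits h𝓑, Singer.ncard_Bprime h𝓑 hSig⟩
end

section
/- With the setup below, if π, π' ∈ 𝓑' and ℓ is a line of PG(2,8) such that π ∩ ℓ = π' ∩ ℓ and |π ∩ ℓ| = 3 (where π ∩ ℓ denotes the set of points of π that are contained in ℓ), then π = π'. -/
lemma Kset_one : (1 : F9) ∈ Kset := by simp [Kset]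

lemma Kset_zero : (0 : F9) ∈ Kset := by simp [Kset]

lemma Kset_mul {a b : F9} (ha : a ∈ Kset) (hb : b ∈ Kset) : a * b ∈ Kset := by
  simp only [Kset, Set.mem_ofPred_eq] at *
  rw [mul_pow, ha, hb]

lemma Kset_inv {a : F9} (ha : a ∈ Kset) : a⁻¹ ∈ Kset := by
  simp only [Kset, Set.mem_ofPred_eq] at *
  rw [inv_pow, ha]

lemma Kset_add {a b : F9} (ha : a ∈ Kset) (hb : b ∈ Kset) : a + b ∈ Kset := by
  simp only [Kset, Set.mem_ofPred_eq] at *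
  have h := add_pow_char_pow (p := 2) (n := 3) a b
  norm_num at h
  rw [h, ha, hb]

lemma self_mem_pt (x : F9) : x ∈ pt x := ⟨1, Kset_one, by simp⟩

lemma pt_mul {x c : F9} (hc : c ∈ Kset) (hc0 : c ≠ 0) : pt (x * c) = pt x := by
  ext y
  constructor
  · rintro ⟨d, hd, rfl⟩
    exact ⟨c * d, Kset_mul hc hd, by ring⟩
  · rintro ⟨d, hd, rfl⟩
    exact ⟨c⁻¹ * d, Kset_mul (Kset_inv hc) hd, by field_simp⟩

lemma zmod_two_cases : ∀ r : ZMod 2, r = 0 ∨ r = 1 := by decide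

/-- The point `xK` as an `𝔽₂`-subspace. -/
def ptSub (x : F9) : Submodule (ZMod 2) F9 where
  carrier := pt x
  zero_mem' := ⟨0, Kset_zero, by simp⟩
  add_mem' := by
    rintro _ _ ⟨a, ha, rfl⟩ ⟨b, hb, rfl⟩
    exact ⟨a + b, Kset_add ha hb, by ring⟩
  smul_mem' := by
    rintro r _ ⟨a, ha, rfl⟩
    obtain rfl | rfl := zmod_two_cases r
    · exact ⟨0, Kset_zero, by simp⟩
    · exact ⟨a, ha, by simp⟩

lemma finrank_span_two {x y : F9} (hx : x ≠ 0) (hy : y ≠ 0) (hxy : x ≠ y) :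
    Module.finrank (ZMod 2) (Submodule.span (ZMod 2) {x, y}) = 2 := by
  have hli : LinearIndependent (ZMod 2) ![x, y] := by
    rw [LinearIndependent.pair_iff]
    intro s t h
    obtain rfl | rfl := zmod_two_cases s <;> obtain rfl | rfl := zmod_two_cases t
    · simp
    · simp [hy] at h
    · simp [hx] at h
    · simp [CharTwo.add_eq_zero, hxy] at h
  have := finrank_span_eq_card hli
  rwa [Matrix.range_cons_cons_empty, Fintype.card_fin] at this

lemma block_unique {g : F9} {𝓑 : Set (Submodule (ZMod 2) F9)} (h𝓑 : IsCyclicTwoAnalog g 𝓑)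
    {S S' : Submodule (ZMod 2) F9} (hS : S ∈ 𝓑) (hS' : S' ∈ 𝓑) {x y : F9}
    (hx : x ≠ 0) (hy : y ≠ 0) (hxy : x ≠ y) (hxS : x ∈ S) (hyS : y ∈ S)
    (hxS' : x ∈ S') (hyS' : y ∈ S') : S = S' := by
  have key : ∀ {U : Submodule (ZMod 2) F9}, x ∈ U → y ∈ U →
      Submodule.span (ZMod 2) {x, y} ≤ U := by
    intro U h1 h2
    rw [Submodule.span_le]
    rintro z (rfl | rfl)
    · exact h1
    · exact h2
  exact (h𝓑.2.2.1 _ (finrank_span_two hx hy hxy)).unique ⟨hS, key hxS hyS⟩ ⟨hS', key hxS' hyS'⟩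

lemma eq_of_mem_pt {g : F9} {𝓑 : Set (Submodule (ZMod 2) F9)} (h𝓑 : IsCyclicTwoAnalog g 𝓑)
    (hSig : SigmaSet ⊆ 𝓑) {B : Submodule (ZMod 2) F9} (hB : B ∈ 𝓑 \ SigmaSet) {x y : F9}
    (hx : x ≠ 0) (hy : y ≠ 0) (hxB : x ∈ B) (hyB : y ∈ B) (h : y ∈ pt x) : x = y := by
  by_contra hxy
  have hs : ptSub x ∈ SigmaSet := ⟨x, hx, rfl⟩
  have := block_unique h𝓑 hB.1 (hSig hs) hx hy hxy hxB hyB (self_mem_pt x) h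
  exact hB.2 (this ▸ hs)

lemma exists_smul_block {g : F9} {𝓑 : Set (Submodule (ZMod 2) F9)} (h𝓑 : IsCyclicTwoAnalog g 𝓑)
    {B : Submodule (ZMod 2) F9} (hB : B ∈ 𝓑) {c : F9} (hc : c ≠ 0) :
    ∃ S ∈ 𝓑, (S : Set F9) = (fun x => x * c) '' (B : Set F9) := by
  obtain ⟨m, rfl⟩ := h𝓑.1 c hc
  clear hc
  induction m with
  | zero => exact ⟨B, hB, by simp⟩
  | succ m ih =>
    obtain ⟨S, hS, hSe⟩ := ih
    obtain ⟨T, hT, hTe⟩ := h𝓑.2.2.2 S hS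
    refine ⟨T, hT, ?_⟩
    rw [hTe, hSe, Set.image_image]
    congr 1
    funext x
    ring

lemma pt_subset_line {L : Set F9} (hL : PGline L) {x : F9} : pt x ⊆ L ↔ x ∈ L := by
  refine ⟨fun h => h (self_mem_pt x), ?_⟩
  obtain ⟨u, v, -, -, rfl⟩ := hL
  rintro ⟨a, ha, b, hb, rfl⟩ _ ⟨c, hc, rfl⟩
  exact ⟨a * c, Kset_mul ha hc, b * c, Kset_mul hb hc, by ring⟩

lemma line_add {L : Set F9} (hL : PGline L) {x y : F9} (hx : x ∈ L) (hy : y ∈ L) :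
    x + y ∈ L := by
  obtain ⟨u, v, -, -, rfl⟩ := hL
  obtain ⟨a, ha, b, hb, rfl⟩ := hx
  obtain ⟨c, hc, d, hd, rfl⟩ := hy
  exact ⟨a + c, Kset_add ha hc, b + d, Kset_add hb hd, by ring⟩

/-- A 3-point section of a block by a line is a subline: `x + y` lies in the block and on the line,
and differs from `x` and `y`, so it represents the third point. -/
lemma add_of_lineSec {g : F9} {𝓑 : Set (Submodule (ZMod 2) F9)} (h𝓑 : IsCyclicTwoAnalog g 𝓑)
    (hSig : SigmaSet ⊆ 𝓑) {B : Submodule (ZMod 2) F9} (hB : B ∈ 𝓑 \ SigmaSet)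
    {L : Set F9} (hL : PGline L) {x y z : F9} (hx : x ≠ 0) (hy : y ≠ 0) (hz : z ≠ 0)
    (hxB : x ∈ B) (hyB : y ∈ B) (hzB : z ∈ B) (hxy : pt x ≠ pt y)
    (h : lineSec (piB B) L = {pt x, pt y, pt z}) : z = x + y := by
  have hxL : x ∈ L := by
    have : pt x ∈ lineSec (piB B) L := by rw [h]; simp
    exact (pt_subset_line hL).1 this.2
  have hyL : y ∈ L := by
    have : pt y ∈ lineSec (piB B) L := by rw [h]; simp
    exact (pt_subset_line hL).1 this.2
  have hne : x + y ≠ 0 := by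
    rw [Ne, CharTwo.add_eq_zero]
    rintro rfl
    exact hxy rfl
  have hm : pt (x + y) ∈ lineSec (piB B) L :=
    ⟨⟨x + y, B.add_mem hxB hyB, hne, rfl⟩, (pt_subset_line hL).2 (line_add hL hxL hyL)⟩
  have key : ∀ w ∈ B, w ≠ 0 → pt (x + y) = pt w → w = x + y := fun w hw hw0 hpt =>
    eq_of_mem_pt h𝓑 hSig hB hw0 hne hw (B.add_mem hxB hyB) (hpt ▸ self_mem_pt _)
  rw [h] at hm
  rcases hm with hm | hm | hm
  · exact absurd (key x hxB hx hm) (by simpa using hy)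
  · exact absurd (key y hyB hy hm) (by simpa using hx)
  · exact key z hzB hz hm

/-- If `π, π' ∈ 𝓑'` and `ℓ` is a line of `PG(2,8)` with `π ∩ ℓ = π' ∩ ℓ` and
`|π ∩ ℓ| = 3`, then `π = π'`. -/
theorem stmt17 (g : F9) (𝓑 : Set (Submodule (ZMod 2) F9))
    (h𝓑 : IsCyclicTwoAnalog g 𝓑) (hSig : SigmaSet ⊆ 𝓑)
    (π π' : Set (Set F9)) (hπ : π ∈ Bprime 𝓑) (hπ' : π' ∈ Bprime 𝓑)
    (L : Set F9) (hL : PGline L)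
    (heq : lineSec π L = lineSec π' L) (h3 : (lineSec π L).ncard = 3) :
    π = π' := by
  obtain ⟨B, hB, rfl⟩ := hπ
  obtain ⟨B', hB', rfl⟩ := hπ'
  obtain ⟨P, Q, R, hPQ, -, -, hs⟩ := Set.ncard_eq_three.1 h3
  have hs' := heq.symm.trans hs
  have rep : ∀ {A : Submodule (ZMod 2) F9}, lineSec (piB A) L = {P, Q, R} →
      P ∈ piB A ∧ Q ∈ piB A ∧ R ∈ piB A := by
    intro A hA
    have hsub : ({P, Q, R} : Set (Set F9)) ⊆ piB A := hA ▸ fun _ h => h.1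
    exact ⟨hsub (by simp), hsub (by simp), hsub (by simp)⟩
  obtain ⟨⟨x, hxB, hx, rfl⟩, ⟨y, hyB, hy, rfl⟩, ⟨z, hzB, hz, rfl⟩⟩ := rep hs
  obtain ⟨⟨x', hxB', hx', ex⟩, ⟨y', hyB', hy', ey⟩, ⟨z', hzB', hz', ez⟩⟩ := rep hs'
  have e := add_of_lineSec h𝓑 hSig hB hL hx hy hz hxB hyB hzB hPQ hs
  have e' := add_of_lineSec h𝓑 hSig hB' hL hx' hy' hz' hxB' hyB' hzB' (ex ▸ ey ▸ hPQ)
    (by rw [hs', ex, ey, ez])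
  obtain ⟨a, ha, rfl⟩ : x' ∈ pt x := ex ▸ self_mem_pt x'
  obtain ⟨b, hb, rfl⟩ : y' ∈ pt y := ey ▸ self_mem_pt y'
  obtain ⟨c, hc, rfl⟩ : z' ∈ pt z := ez ▸ self_mem_pt z'
  subst e
  have hb0 : b ≠ 0 := right_ne_zero_of_mul hy'
  have hca : c = a := by
    by_contra hne
    -- The relation `x (c - a) = y (b - c)` makes `x` and `y` span the same point.
    have hd : c + a ≠ 0 := by rwa [Ne, CharTwo.add_eq_zero]
    have hrel : x * (c + a) = y * (b + c) := by
      rw [← CharTwo.sub_eq_add c a, ← CharTwo.sub_eq_add b c]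
      linear_combination e'
    have hd' : b + c ≠ 0 := by
      intro h0
      rw [h0, mul_zero] at hrel
      exact mul_ne_zero hx hd hrel
    apply hPQ
    rw [← pt_mul (Kset_add hc ha) hd, hrel, pt_mul (Kset_add hb hc) hd']
  subst hca
  have hcb : c = b := mul_left_cancel₀ hy (by linear_combination e')
  subst hcb
  obtain ⟨S, hS, hSe⟩ := exists_smul_block h𝓑 hB.1 hb0
  have hmem : ∀ w ∈ B, w * c ∈ S := fun w hw => by
    rw [← SetLike.mem_coe, hSe]
    exact ⟨w, hw, rfl⟩
  have hne : x * c ≠ y * c := fun h => hPQ (by rw [mul_right_cancel₀ hb0 h])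
  have hBS : B' = S := block_unique h𝓑 hB'.1 hS hx' hy' hne hxB' hyB' (hmem x hxB) (hmem y hyB)
  subst hBS
  ext P
  constructor
  · rintro ⟨w, hw, hw0, rfl⟩
    exact ⟨w * c, hmem w hw, mul_ne_zero hw0 hb0, (pt_mul hc hb0).symm⟩
  · rintro ⟨w, hw, hw0, rfl⟩
    rw [hSe] at hw
    obtain ⟨v, hv, rfl⟩ := hw
    exact ⟨v, hv, left_ne_zero_of_mul hw0, pt_mul hc hb0⟩
end
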